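/- arXiv:1003.0982 — 5 statements merged into one kernel-verified Lean document; each statement's English description precedes it below -/
import Mathlib

section
/- Let p be a prime and G a finite non-abelian p-group of order p^n whose derived subgroup G' has order at least p^3. Then the Schur multiplier of G does not have order p^{(n-1)(n-2)/2 - 1} (i.e. G does not satisfy s(G) = 2). -/
/-- The kernel of the canonical free presentation `FreeGroup G → G`. -/
def presentationKernel (G : Type u) [Group G] : Subgroup (FreeGroup G) :=
  (FreeGroup.lift (id : G → G)).ker

/-- The Schur multiplier `M(G) = H₂(G, ℤ)` (second integral group homology) of a
group `G`, realised via Hopf's integral formula `H₂(G, ℤ) ≅ (R ⊓ [F, F]) / [F, R]`,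
where `F = FreeGroup G` is the canonical free group surjecting onto `G` with
kernel `R`. -/
def SchurMultiplier (G : Type u) [Group G] : Type u :=
  ↥(presentationKernel G ⊓ commutator (FreeGroup G)) ⧸
    (⁅(⊤ : Subgroup (FreeGroup G)), presentationKernel G⁆.subgroupOf
      (presentationKernel G ⊓ commutator (FreeGroup G)))

/-- A finite `p`-group `H` is extraspecial if its center, derived subgroup and
Frattini subgroup coincide and have order `p`. -/
def IsExtraspecial (p : ℕ) (H : Type*) [Group H] : Prop :=
  Subgroup.center H = commutator H ∧ Subgroup.center H = frattini H ∧
    Nat.card (Subgroup.center H) = p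

namespace SchurAux

open Subgroup
open scoped commutatorElement

lemma normal_of_le_center {G : Type*} [Group G] {Z : Subgroup G} (h : Z ≤ center G) :
    Z.Normal :=
  ⟨fun z hz g => by
    rw [mem_center_iff.1 (h hz) g, mul_inv_cancel_right]; exact hz⟩

/-- The homomorphism `e ↦ ⁅a, e⁆` when all these commutators are central. -/
def commHom {G : Type*} [Group G] (a : G) (h : ∀ e, ⁅a, e⁆ ∈ center G) : G →* G where
  toFun e := ⁅a, e⁆
  map_one' := by simp
  map_mul' c d := by
    rw [commutatorElement_mul_right_eq_mul_conj]
    have := (mem_center_iff.1 (h d)) c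
    simp only [mul_assoc]
    rw [← mul_assoc c, this]
    simp

lemma mem_ker_commHom {G : Type*} [Group G] (a : G) (h : ∀ e, ⁅a, e⁆ ∈ center G) (e : G) :
    e ∈ (commHom a h).ker ↔ Commute a e := by
  rw [MonoidHom.mem_ker]
  exact commutatorElement_eq_one_iff_commute

lemma range_commHom_le {G : Type*} [Group G] (a : G) (h : ∀ e, ⁅a, e⁆ ∈ center G) :
    (commHom a h).range ≤ commutator G := by
  rintro _ ⟨e, rfl⟩
  exact commutator_mem_commutator (mem_top _) (mem_top _)

lemma map_comm_top {G H : Type*} [Group G] [Group H] (f : G →* H) (hf : Function.Surjective f) :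
    (commutator G).map f = commutator H := by
  rw [_root_.commutator_def, _root_.commutator_def, map_commutator, ← MonoidHom.range_eq_map,
    MonoidHom.range_eq_top.2 hf]

/-- A nontrivial normal subgroup of a finite p-group contains a central element of order p. -/
lemma exists_central {p n : ℕ} (hp : p.Prime) {G : Type*} [Group G] (hG : Nat.card G = p ^ n)
    (N : Subgroup G) [N.Normal] (hN : N ≠ ⊥) :
    ∃ x ∈ N, x ∈ center G ∧ orderOf x = p := by
  have : Fact p.Prime := ⟨hp⟩
  have : Finite G := Nat.finite_of_card_ne_zero (by rw [hG]; exact pow_ne_zero _ hp.ne_zero)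
  have hP : IsPGroup p G := IsPGroup.of_card hG
  have : Nontrivial N := (Subgroup.nontrivial_iff_ne_bot N).2 hN
  have dvd : p ∣ Nat.card N := by
    obtain ⟨k, hk0, hk⟩ := (hP.to_subgroup N).nontrivial_iff_card.mp inferInstance
    exact hk.symm ▸ dvd_pow_self _ (ne_of_gt hk0)
  obtain ⟨b, hb, hb1⟩ :=
    (hP.of_equiv ConjAct.toConjAct).exists_fixed_point_of_prime_dvd_card_of_fixed_point N dvd
      (a := 1) (by intro g; simp)
  have hbc : (b : G) ∈ center G := by
    rw [mem_center_iff]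
    intro g
    have h1 := congrArg (Subtype.val) (hb (ConjAct.toConjAct g))
    rw [ConjAct.Subgroup.val_conj_smul, ConjAct.toConjAct_smul] at h1
    exact mul_inv_eq_iff_eq_mul.1 h1
  obtain ⟨y, hy⟩ : ∃ y : (N ⊓ center G : Subgroup G), orderOf y = p := by
    apply exists_prime_orderOf_dvd_card'
    have : Nontrivial (N ⊓ center G : Subgroup G) :=
      ⟨⟨⟨b, b.2, hbc⟩, 1, fun h => hb1 (by
        apply Subtype.ext
        exact (congrArg Subtype.val h).symm)⟩⟩
    obtain ⟨k, hk0, hk⟩ := (hP.to_subgroup (N ⊓ center G)).nontrivial_iff_card.mp inferInstance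
    exact hk.symm ▸ dvd_pow_self _ (ne_of_gt hk0)
  exact ⟨y, y.2.1, y.2.2, by rw [orderOf_coe, hy]⟩

lemma exists_lift {p n : ℕ} (hp : p.Prime) {E : Type*} [Group E] (Z : Subgroup E) [Z.Normal]
    (hi : Z.index = p ^ n) (A : Subgroup E) [A.Normal] (hA : ¬ A ≤ Z) :
    ∃ x ∈ A, (QuotientGroup.mk' Z x) ∈ center (E ⧸ Z) ∧ orderOf (QuotientGroup.mk' Z x) = p := by
  have : (A.map (QuotientGroup.mk' Z)).Normal :=
    Normal.map inferInstance _ (QuotientGroup.mk'_surjective Z)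
  obtain ⟨y, ⟨x, hx, rfl⟩, hy2, hy3⟩ := exists_central hp (G := E ⧸ Z) (n := n)
    (by rw [← index_eq_card, hi]) (A.map (QuotientGroup.mk' Z)) (by
      intro h
      rw [Subgroup.map_eq_bot_iff, QuotientGroup.ker_mk'] at h
      exact hA h)
  exact ⟨x, hx, hy2, hy3⟩

lemma index_sup_zpowers {p n : ℕ} (hp : p.Prime) {E : Type*} [Group E] (Z : Subgroup E) [Z.Normal]
    (hi : Z.index = p ^ (n + 1)) (x : E) (hx : orderOf (QuotientGroup.mk' Z x) = p) :
    (Z ⊔ zpowers x).index = p ^ n := by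
  have h := relIndex_mul_index (le_sup_left : Z ≤ Z ⊔ zpowers x)
  rw [relIndex_sup_left] at h
  have h2 := relIndex_ker (zpowers x) (QuotientGroup.mk' Z)
  rw [QuotientGroup.ker_mk', MonoidHom.map_zpowers, Nat.card_zpowers, hx] at h2
  rw [h2, hi, pow_succ'] at h
  exact Nat.eq_of_mul_eq_mul_left hp.pos h

/-- One step of the induction. -/
lemma step {p n : ℕ} (hp : p.Prime) {E : Type u} [Group E] (Z : Subgroup E) [Z.Normal]
    (hZ : Z ≤ center E)
    (hi : Z.index = p ^ (n + 1)) (x : E) (hc : QuotientGroup.mk' Z x ∈ center (E ⧸ Z))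
    (hx : orderOf (QuotientGroup.mk' Z x) = p) :
    ∃ (Q : Type u) (_ : Group Q) (W : Subgroup Q), W ≤ center Q ∧ W.index = p ^ n ∧
      Nat.card (commutator E) = (centralizer {x}).index * Nat.card (commutator Q) ∧
      (x ∈ commutator E → (W ⊔ commutator Q).index = (Z ⊔ commutator E).index) := by
  have hxe : ∀ e, ⁅x, e⁆ ∈ Z := by
    intro e
    rw [← QuotientGroup.eq_one_iff (N := Z)]
    change QuotientGroup.mk' Z ⁅x, e⁆ = 1
    rw [map_commutatorElement, commutatorElement_eq_one_iff_commute]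
    exact ((mem_center_iff.1 hc) _).symm
  set φ := commHom x (fun e => hZ (hxe e)) with hφ
  set K := φ.range with hK
  have hKZ : K ≤ Z := by
    rintro _ ⟨e, rfl⟩
    exact hxe e
  have : K.Normal := normal_of_le_center (hKZ.trans hZ)
  have hKc : K ≤ commutator E := range_commHom_le _ _
  have hker : φ.ker = centralizer {x} := by
    ext e
    rw [hφ, mem_ker_commHom, mem_centralizer_singleton_iff]
    exact ⟨fun h => h.symm, fun h => Eq.symm h⟩
  have hs := QuotientGroup.mk'_surjective K
  refine ⟨E ⧸ K, inferInstance, (Z ⊔ zpowers x).map (QuotientGroup.mk' K), ?_, ?_, ?_, ?_⟩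
  · rw [map_le_iff_le_comap, sup_le_iff, zpowers_le]
    constructor
    · intro z hz
      rw [mem_comap, mem_center_iff]
      intro g
      obtain ⟨e, rfl⟩ := hs g
      rw [← map_mul, ← map_mul, mem_center_iff.1 (hZ hz) e]
    · rw [mem_comap, mem_center_iff]
      intro g
      obtain ⟨e, rfl⟩ := hs g
      refine Eq.symm ?_
      rw [← commutatorElement_eq_one_iff_mul_comm, ← map_commutatorElement]
      exact (QuotientGroup.eq_one_iff _).2 ⟨e, rfl⟩
  · rw [index_map_eq _ hs (by rw [QuotientGroup.ker_mk']; exact hKZ.trans le_sup_left)]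
    exact index_sup_zpowers hp Z hi x hx
  · rw [← map_comm_top _ hs, ← relIndex_ker, QuotientGroup.ker_mk', ← hker, index_ker,
      ← relIndex_bot_left, ← relIndex_bot_left, relIndex_mul_relIndex _ _ _ bot_le hKc]
  · intro hxc
    rw [← map_comm_top _ hs, ← Subgroup.map_sup,
      index_map_eq _ hs (by rw [QuotientGroup.ker_mk']; exact hKc.trans le_sup_right), sup_assoc,
      sup_eq_right.2 ((zpowers_le).2 hxc)]

lemma le_centralizer_aux {E : Type*} [Group E] {Z : Subgroup E} (hZ : Z ≤ center E) (x : E) :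
    Z ⊔ zpowers x ≤ centralizer {x} := by
  rw [sup_le_iff, zpowers_le]
  exact ⟨hZ.trans (center_le_centralizer _), by rw [mem_centralizer_singleton_iff]⟩

/-- Wiegold's bound. -/
lemma wiegold {p : ℕ} (hp : p.Prime) (n : ℕ) : ∀ {E : Type u} [Group E] (Z : Subgroup E),
    Z ≤ center E → Z.index = p ^ n → Nat.card (commutator E) ∣ p ^ (n * (n - 1) / 2) := by
  induction n with
  | zero =>
    intro E _ Z hZ hi
    rw [pow_zero, index_eq_one] at hi
    have : commutator E = ⊥ := by
      rw [_root_.commutator_def, commutator_top_right_eq_bot_iff_le_center, ← hi]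
      exact hZ
    rw [this]; simp
  | succ n ih =>
    intro E _ Z hZ hi
    have : Z.Normal := normal_of_le_center hZ
    obtain ⟨x, -, hc, hx⟩ := exists_lift hp Z hi ⊤ (by
      intro h
      rw [top_le_iff.1 h, index_top] at hi
      exact (Nat.one_lt_pow (Nat.succ_ne_zero n) hp.one_lt).ne hi)
    obtain ⟨Q, _, W, hW, hWi, hcard, -⟩ := step hp Z hZ hi x hc hx
    rw [hcard]
    have e : (n + 1) * (n + 1 - 1) / 2 = n + n * (n - 1) / 2 := by
      have := Nat.triangle_succ n
      rw [this, add_comm]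
    rw [e, pow_add]
    refine mul_dvd_mul ?_ (ih W hW hWi)
    rw [← index_sup_zpowers hp Z hi x hx]
    exact index_dvd_of_le (le_centralizer_aux hZ x)

lemma base {p : ℕ} (hp : p.Prime) (m : ℕ) {E : Type u} [Group E] (Z : Subgroup E)
    (hZ : Z ≤ center E) (hi : Z.index = p ^ (m + 1)) (hm : (Z ⊔ commutator E).index = p ^ m) :
    Nat.card (commutator E) ∣ p ^ (2 + m * (m - 1) / 2) := by
  have : Z.Normal := normal_of_le_center hZ
  have hnot : ¬ commutator E ≤ Z := by
    intro h
    rw [sup_eq_left.2 h, hi] at hm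
    exact absurd (Nat.pow_right_injective hp.two_le hm) (by omega)
  obtain ⟨x₀, hx₀, hc₀, ho₀⟩ := exists_lift hp Z hi (commutator E) hnot
  set π := QuotientGroup.mk' Z with hπ
  have hs : Function.Surjective π := QuotientGroup.mk'_surjective Z
  have hle : Z ⊔ zpowers x₀ ≤ Z ⊔ commutator E := sup_le_sup_left (zpowers_le.2 hx₀) _
  have hle2 : Z ⊔ commutator E ≤ Z ⊔ zpowers x₀ := by
    have h := relIndex_mul_index hle
    rw [hm, index_sup_zpowers hp Z hi x₀ ho₀] at h
    rw [← relIndex_eq_one]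
    exact Nat.eq_of_mul_eq_mul_right (pow_pos hp.pos m) (by rw [h, one_mul])
  have hcz : commutator (E ⧸ Z) ≤ zpowers (π x₀) := by
    rw [← map_comm_top π hs, ← MonoidHom.map_zpowers]
    refine (map_mono (le_sup_right.trans hle2)).trans ?_
    rw [Subgroup.map_sup, hπ]
    simp
  have hcc : commutator (E ⧸ Z) ≤ center (E ⧸ Z) := hcz.trans (zpowers_le.2 hc₀)
  -- choose a commutator outside Z
  obtain ⟨a, b, hab⟩ : ∃ a b : E, ⁅a, b⁆ ∉ Z := by
    by_contra! h
    exact hnot (by rw [_root_.commutator_def, commutator_le]; exact fun g _ k _ => h g k)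
  have habG : π ⁅a, b⁆ ∈ commutator (E ⧸ Z) := by
    rw [map_commutatorElement]
    exact commutator_mem_commutator (mem_top _) (mem_top _)
  have hord : orderOf (π ⁅a, b⁆) = p := by
    have : Fact p.Prime := ⟨hp⟩
    apply orderOf_eq_prime
    · obtain ⟨i, hi'⟩ := mem_zpowers_iff.1 (hcz habG)
      rw [← hi', ← zpow_natCast, ← zpow_mul, mul_comm, zpow_mul, zpow_natCast, ← ho₀,
        pow_orderOf_eq_one, one_zpow]
    · intro h
      exact hab ((QuotientGroup.eq_one_iff _).1 h)
  obtain ⟨Q, _, W, hW, hWi, hcard, -⟩ := step hp Z hZ hi ⁅a, b⁆ (hcc habG) hord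
  rw [hcard, pow_add]
  refine mul_dvd_mul ?_ (wiegold hp m W hW hWi)
  have hcen : ∀ g e : E ⧸ Z, ⁅g, e⁆ ∈ center (E ⧸ Z) := fun g e =>
    hcc (commutator_mem_commutator (mem_top _) (mem_top _))
  set ψ : E ⧸ Z →* (E ⧸ Z) × (E ⧸ Z) :=
    (commHom (π a) (hcen _)).prod (commHom (π b) (hcen _)) with hψ
  have h1 : ψ.range ≤ (commutator (E ⧸ Z)).prod (commutator (E ⧸ Z)) := by
    rintro _ ⟨e, rfl⟩
    exact ⟨range_commHom_le _ _ ⟨e, rfl⟩, range_commHom_le _ _ ⟨e, rfl⟩⟩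
  have h2 : Nat.card (commutator (E ⧸ Z)) ∣ p := by
    rw [← ho₀, ← Nat.card_zpowers]
    exact card_dvd_of_le hcz
  have h3 : Nat.card ψ.range ∣ p ^ 2 := by
    refine (card_dvd_of_le h1).trans ?_
    rw [Nat.card_congr ((commutator (E ⧸ Z)).prodEquiv (commutator (E ⧸ Z))).toEquiv,
      Nat.card_prod, sq]
    exact mul_dvd_mul h2 h2
  rw [← index_ker, ← index_comap_of_surjective _ hs] at h3
  refine (index_dvd_of_le ?_).trans h3
  intro e he
  rw [mem_comap, MonoidHom.mem_ker] at he
  have hea : ⁅a, e⁆ ∈ center E := by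
    apply hZ
    rw [← QuotientGroup.eq_one_iff (N := Z)]
    exact (map_commutatorElement π a e).trans (congrArg Prod.fst he)
  have heb : ⁅b, e⁆ ∈ center E := by
    apply hZ
    rw [← QuotientGroup.eq_one_iff (N := Z)]
    exact (map_commutatorElement π b e).trans (congrArg Prod.snd he)
  rw [mem_centralizer_singleton_iff]
  have hea' : ⁅e, a⁆ ∈ center E := by rw [← commutatorElement_inv]; exact inv_mem hea
  have heb' : ⁅e, b⁆ ∈ center E := by rw [← commutatorElement_inv]; exact inv_mem heb
  rw [← mul_inv_eq_iff_eq_mul, conjugate_commutatorElement]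
  have ea : e * a * e⁻¹ = ⁅e, a⁆ * a := by simp [commutatorElement_def]
  have eb : e * b * e⁻¹ = ⁅e, b⁆ * b := by simp [commutatorElement_def]
  rw [ea, eb]
  generalize ⁅e, a⁆ = z at *
  generalize ⁅e, b⁆ = w at *
  rw [commutatorElement_mul_left_eq_conj_mul, commutatorElement_mul_right_eq_mul_conj]
  have c1 : ∀ g : E, ⁅z, g⁆ = 1 := fun g =>
    commutatorElement_eq_one_iff_mul_comm.2 ((mem_center_iff.1 hea') g).symm
  have c2 : ∀ g : E, ⁅g, w⁆ = 1 := fun g =>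
    commutatorElement_eq_one_iff_mul_comm.2 ((mem_center_iff.1 heb') g)
  rw [c1, c2]
  have c3 := (mem_center_iff.1 heb') ⁅a, b⁆
  have c4 := (mem_center_iff.1 hea') ⁅a, b⁆
  simp only [one_mul, mul_one]
  rw [← c3, mul_inv_cancel_right, ← c4, mul_inv_cancel_right]

lemma main_bound {p : ℕ} (hp : p.Prime) (m k : ℕ) : ∀ {E : Type u} [Group E] (Z : Subgroup E),
    Z ≤ center E → Z.index = p ^ (m + (k + 1)) → (Z ⊔ commutator E).index = p ^ m →
    Nat.card (commutator E) ∣ p ^ (k * m + (2 + m * (m - 1) / 2)) := by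
  induction k with
  | zero =>
    intro E _ Z hZ hi hm
    simpa using base hp m Z hZ hi hm
  | succ k ih =>
    intro E _ Z hZ hi hm
    have : Z.Normal := normal_of_le_center hZ
    have hnot : ¬ commutator E ≤ Z := by
      intro h
      rw [sup_eq_left.2 h, hi] at hm
      exact absurd (Nat.pow_right_injective hp.two_le hm) (by omega)
    obtain ⟨x, hxE, hc, hx⟩ := exists_lift hp Z hi (commutator E) hnot
    obtain ⟨Q, _, W, hW, hWi, hcard, hsup⟩ :=
      step hp (n := m + (k + 1)) Z hZ (by rw [hi]; rfl) x hc hx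
    have e : (k + 1) * m + (2 + m * (m - 1) / 2) = m + (k * m + (2 + m * (m - 1) / 2)) := by ring
    rw [hcard, e, pow_add]
    refine mul_dvd_mul ?_ (ih W hW hWi ((hsup hxE).trans hm))
    rw [← hm]
    refine index_dvd_of_le (sup_le (hZ.trans (center_le_centralizer _)) ?_)
    have hxe : ∀ e, ⁅x, e⁆ ∈ Z := by
      intro e
      rw [← QuotientGroup.eq_one_iff (N := Z)]
      change QuotientGroup.mk' Z ⁅x, e⁆ = 1
      rw [map_commutatorElement, commutatorElement_eq_one_iff_commute]
      exact ((mem_center_iff.1 hc) _).symm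
    set φ := commHom x (fun e => hZ (hxe e)) with hφ
    rw [_root_.commutator_def, commutator_le]
    intro g _ h _
    have : ⁅g, h⁆ ∈ φ.ker := by
      rw [MonoidHom.mem_ker, map_commutatorElement, commutatorElement_eq_one_iff_mul_comm]
      exact (mem_center_iff.1 (hZ (hxe h)) _)
    rw [mem_ker_commHom] at this
    rw [mem_centralizer_singleton_iff]
    exact this.symm

lemma arith (m k : ℕ) (hk : 2 ≤ k) :
    k * m + (2 + m * (m - 1) / 2) <
      ((m + (k + 1)) - 1) * ((m + (k + 1)) - 2) / 2 - 1 + (k + 1) := by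
  obtain ⟨j, rfl⟩ := Nat.exists_eq_add_of_le hk
  have h1 : m * (m - 1) / 2 * 2 = m * (m - 1) :=
    Nat.div_mul_cancel (Nat.even_mul_pred_self m).two_dvd
  have e1 : m + (2 + j + 1) - 1 = m + j + 2 := by omega
  have e2 : m + (2 + j + 1) - 2 = m + j + 2 - 1 := by omega
  rw [e1, e2]
  have h2 : (m + j + 2) * (m + j + 2 - 1) / 2 * 2 = (m + j + 2) * (m + j + 2 - 1) :=
    Nat.div_mul_cancel (Nat.even_mul_pred_self _).two_dvd
  generalize m * (m - 1) / 2 = A at *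
  generalize (m + j + 2) * (m + j + 2 - 1) / 2 = B at *
  have e3 : m + j + 2 - 1 = m + j + 1 := by omega
  rw [e3] at h2
  have h3 : m * (m - 1) + m = m * m := by
    cases m with
    | zero => rfl
    | succ m => simp; ring
  have key : (2 + j) * m + (2 + A) + 1 ≤ B + j + 2 := by nlinarith
  omega

end SchurAux

open SchurAux Subgroup commutatorElement in
/-- **Lemma 1.** There is no `p`-group with `|G'| ≥ p^3` and `s(G) = 2`: if `G` is a
finite non-abelian `p`-group of order `p^n` whose derived subgroup has order at least
`p^3`, then its Schur multiplier does not have order `p^((n-1)(n-2)/2 - 1)`. -/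
theorem no_s_eq_two_of_card_commutator_ge {p n : ℕ} (hp : p.Prime)
    {G : Type*} [Group G] (hG : Nat.card G = p ^ n)
    (hnab : ∃ a b : G, a * b ≠ b * a)
    (hG' : p ^ 3 ≤ Nat.card (commutator G)) :
    Nat.card (SchurMultiplier G) ≠ p ^ ((n - 1) * (n - 2) / 2 - 1) := by
  intro hM
  set F := FreeGroup G
  set R := presentationKernel G with hR
  set f : F →* G := FreeGroup.lift (id : G → G) with hf
  have hfs : Function.Surjective f := fun g => ⟨FreeGroup.of g, FreeGroup.lift_apply_of⟩
  have hfk : f.ker = R := rfl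
  have : R.Normal := by rw [← hfk]; infer_instance
  set L : Subgroup F := ⁅(⊤ : Subgroup F), R⁆ with hL
  have hLR : L ≤ R := commutator_le_right _ _
  have hLF : L ≤ commutator F := commutator_mono le_rfl le_top
  have hM1 : L.relIndex (R ⊓ commutator F) = p ^ ((n - 1) * (n - 2) / 2 - 1) := hM
  have hRi : R.index = p ^ n := by
    rw [← hfk, index_ker, MonoidHom.range_eq_top.2 hfs, card_top, hG]
  have hRF : R.relIndex (commutator F) = Nat.card (commutator G) := by
    rw [← hfk, relIndex_ker, map_comm_top f hfs]
  obtain ⟨k', hk'n, hk'⟩ := (Nat.dvd_prime_pow hp).1 (hG ▸ card_subgroup_dvd_card (commutator G))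
  rw [hk'] at hG' hRF
  have hk3 : 3 ≤ k' := (Nat.pow_le_pow_iff_right hp.one_lt).1 hG'
  obtain ⟨k, rfl⟩ : ∃ k, k' = k + 1 := ⟨k' - 1, by omega⟩
  obtain ⟨m, rfl⟩ : ∃ m, n = m + (k + 1) := ⟨n - (k + 1), by omega⟩
  set π := QuotientGroup.mk' L with hπ
  have hs : Function.Surjective π := QuotientGroup.mk'_surjective L
  have hker : π.ker = L := QuotientGroup.ker_mk' L
  have hcardE : Nat.card (commutator (F ⧸ L)) =
      p ^ ((m + (k + 1) - 1) * (m + (k + 1) - 2) / 2 - 1 + (k + 1)) := by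
    rw [← map_comm_top π hs, ← relIndex_ker, hker,
      ← relIndex_mul_relIndex L (R ⊓ commutator F) _ (le_inf hLR hLF) inf_le_right, hM1,
      inf_relIndex_right, hRF, ← pow_add]
  have hZ : R.map π ≤ center (F ⧸ L) := by
    rw [← commutator_top_left_eq_bot_iff_le_center, ← MonoidHom.range_eq_top.2 hs,
      MonoidHom.range_eq_map, ← map_commutator, Subgroup.map_eq_bot_iff, hker]
  have hZi : (R.map π).index = p ^ (m + (k + 1)) := by
    rw [index_map_eq _ hs (by rw [hker]; exact hLR), hRi]
  have hZm : (R.map π ⊔ commutator (F ⧸ L)).index = p ^ m := by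
    rw [← map_comm_top π hs, ← Subgroup.map_sup,
      index_map_eq _ hs (by rw [hker]; exact hLR.trans le_sup_left)]
    have h := relIndex_mul_index (le_sup_left : R ≤ R ⊔ commutator F)
    rw [relIndex_sup_left, hRF, hRi, pow_add p m, mul_comm] at h
    exact Nat.eq_of_mul_eq_mul_right (pow_pos hp.pos (k + 1)) h
  have hb := main_bound hp m k (R.map π) hZ hZi hZm
  rw [hcardE, Nat.pow_dvd_pow_iff_le_right hp.one_lt] at hb
  exact absurd (arith m k (by omega)) (by omega)
end

section
/- Let p be a prime and G a finite non-abelian p-group of order p^n with n ≥ 5 whose abelianization G/G' is not elementary abelian (i.e. does not have exponent p). Then the Schur multiplier of G does not have order p^{(n-1)(n-2)/2 - 1} (i.e. G does not satisfy s(G) = 2). -/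
open Subgroup
open scoped commutatorElement

def cHom {Q : Type*} [Group Q] (u : Q) (hu : ∀ g, ⁅u, g⁆ ∈ center Q) : Q →* Q :=
  MonoidHom.mk' (fun g => ⁅u, g⁆) (by
    intro g h
    have := mem_center_iff.1 (hu h) g
    have e : ⁅u, g * h⁆ = (u * g * u⁻¹) * (⁅u, h⁆ * g⁻¹) := by
      simp only [commutatorElement_def]; group
    rw [e, ← mem_center_iff.1 (hu h) g⁻¹, commutatorElement_def u g]; group)

lemma cHom_ker {Q : Type*} [Group Q] (u : Q) (hu : ∀ g, ⁅u, g⁆ ∈ center Q) :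
    (cHom u hu).ker = centralizer {u} := by
  ext g
  rw [MonoidHom.mem_ker, mem_centralizer_singleton_iff]
  change ⁅u, g⁆ = 1 ↔ _
  rw [commutatorElement_eq_one_iff_mul_comm]
  exact eq_comm

lemma comm_zpow {Q : Type*} [Group Q] (u g : Q) (hu : ∀ g, ⁅u, g⁆ ∈ center Q) (i : ℤ) :
    ⁅u ^ i, g⁆ = ⁅u, g⁆ ^ i := by
  have hc : ∀ x, Commute x ⁅u, g⁆ := fun x => mem_center_iff.1 (hu g) x
  have h1 : g * u⁻¹ * g⁻¹ = u⁻¹ * ⁅u, g⁆ := by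
    simp only [commutatorElement_def]; group
  have h2 : (g * u⁻¹ * g⁻¹) ^ i = (u⁻¹) ^ i * ⁅u, g⁆ ^ i := by
    rw [h1, (hc u⁻¹).mul_zpow]
  rw [conj_zpow] at h2
  have : ⁅u ^ i, g⁆ = u ^ i * (g * u⁻¹ ^ i * g⁻¹) := by
    rw [commutatorElement_def]; group
  rw [this, h2]; group

lemma mk_center {F : Type*} [Group F] (R : Subgroup F) [R.Normal] {r : F} (hr : r ∈ R) :
    (QuotientGroup.mk' ⁅(⊤ : Subgroup F), R⁆ r) ∈ center (F ⧸ ⁅(⊤ : Subgroup F), R⁆) := by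
  rw [mem_center_iff]
  intro g
  obtain ⟨g, rfl⟩ := QuotientGroup.mk'_surjective _ g
  rw [← commutatorElement_eq_one_iff_mul_comm, ← map_commutatorElement, ← MonoidHom.mem_ker,
    QuotientGroup.ker_mk']
  exact commutator_mem_commutator (mem_top _) hr

lemma key {F : Type*} [Group F] (R S : Subgroup F) [R.Normal] [S.Normal] (s : F) (hs : s ∈ S)
    (hS : ∀ t ∈ S, ∃ r ∈ R, ∃ i : ℤ, t = r * s ^ i) (hsR : ∀ g, ⁅s, g⁆ ∈ R) :
    ⁅(⊤ : Subgroup F), R⁆.relIndex ⁅(⊤ : Subgroup F), S⁆ =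
      ((centralizer {QuotientGroup.mk' ⁅(⊤ : Subgroup F), R⁆ s}).comap
        (QuotientGroup.mk' ⁅(⊤ : Subgroup F), R⁆)).index := by
  set π := QuotientGroup.mk' ⁅(⊤ : Subgroup F), R⁆ with hπ
  have hsurj : Function.Surjective π := QuotientGroup.mk'_surjective _
  have hu : ∀ g, ⁅π s, g⁆ ∈ center (F ⧸ ⁅(⊤ : Subgroup F), R⁆) := by
    intro g
    obtain ⟨g, rfl⟩ := hsurj g
    rw [← map_commutatorElement]
    exact mk_center R (hsR g)
  rw [index_comap_of_surjective _ hsurj, ← cHom_ker _ hu, index_ker]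
  have hk : π.ker = ⁅(⊤ : Subgroup F), R⁆ := QuotientGroup.ker_mk' _
  conv_lhs => rw [← hk]
  rw [relIndex_ker]
  suffices h : map π ⁅(⊤ : Subgroup F), S⁆ = (cHom _ hu).range by rw [h]
  apply le_antisymm
  · rw [map_le_iff_le_comap, commutator_comm, commutator_le]
    intro t ht g _
    obtain ⟨r, hr, i, rfl⟩ := hS t ht
    rw [mem_comap, map_commutatorElement, map_mul, map_zpow]
    have hr' := mem_center_iff.1 (mk_center R hr)
    rw [← hπ] at hr'
    have : ⁅π r * π s ^ i, π g⁆ = ⁅π s ^ i, π g⁆ := by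
      have h1 : ⁅π r * π s ^ i, π g⁆ =
        (π r * (π s ^ i * π g * (π s ^ i)⁻¹)) * (π r)⁻¹ * (π g)⁻¹ := by
        rw [commutatorElement_def]; group
      rw [h1, ← hr', commutatorElement_def]; group
    rw [this, comm_zpow _ _ hu]
    have hm : ⁅π s, π g⁆ ∈ (cHom _ hu).range := ⟨π g, rfl⟩
    exact zpow_mem hm i
  · rintro _ ⟨g, rfl⟩
    obtain ⟨g, rfl⟩ := hsurj g
    refine ⟨⁅s, g⁆, ?_, map_commutatorElement _ _ _⟩
    rw [commutator_comm]
    exact commutator_mem_commutator hs (mem_top _)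

/-- normal subgroups of p-groups meet the centre -/
lemma exists_central {G : Type*} [Group G] [Finite G] {p : ℕ} [Fact p.Prime] (hG : IsPGroup p G)
    (N : Subgroup G) [N.Normal] (hN : N ≠ ⊥) : ∃ z ∈ N, z ∈ center G ∧ orderOf z = p := by
  have h1 : N ⊓ center G ≠ ⊥ := by
    have hc := (hG.of_equiv ConjAct.toConjAct).exists_fixed_point_of_prime_dvd_card_of_fixed_point N
      (a := 1) ?_ ?_
    · obtain ⟨b, hb, hb1⟩ := hc
      intro h
      have : (b : G) ∈ N ⊓ center G := by
        refine ⟨b.2, mem_center_iff.2 fun g => ?_⟩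
        have := congrArg Subtype.val (hb (ConjAct.toConjAct g))
        rw [ConjAct.Subgroup.val_conj_smul, ConjAct.toConjAct_smul] at this
        exact mul_inv_eq_iff_eq_mul.1 this
      rw [h, mem_bot] at this
      exact hb1 (Subtype.ext this.symm)
    · rcases (hG.to_subgroup N).card_eq_or_dvd with h | h
      · exact absurd (card_eq_one.1 h) hN
      · exact h
    · intro g; exact smul_one g
  have h2 : p ∣ Nat.card ↥(N ⊓ center G) := by
    rcases (hG.to_subgroup (N ⊓ center G)).card_eq_or_dvd with h | h
    · exact absurd (card_eq_one.1 h) h1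
    · exact h
  obtain ⟨z, hz⟩ := exists_prime_orderOf_dvd_card' p h2
  exact ⟨z, z.2.1, z.2.2, by rw [← hz, orderOf_coe]⟩

lemma zpowers_prime {G : Type*} [Group G] {p : ℕ} (hp : p.Prime) {w a : G} (hw : orderOf w = p)
    (ha : a ∈ zpowers w) (h1 : a ≠ 1) : zpowers a = zpowers w := by
  have hf : Finite (zpowers w) := by
    rw [← Nat.card_pos_iff.trans (and_iff_right ⟨1⟩), Nat.card_zpowers, hw]; exact hp.pos
  apply eq_of_le_of_card_ge
  · simpa using ha
  · rw [Nat.card_zpowers, Nat.card_zpowers]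
    have : orderOf a ∣ p := by
      rw [← hw, ← Nat.card_zpowers w, ← Nat.card_zpowers a]
      exact card_dvd_of_le (by simpa using ha)
    rcases (Nat.dvd_prime hp).1 this with h | h
    · exact absurd (orderOf_eq_one_iff.1 h) h1
    · rw [h, hw]

lemma exists_N {G : Type*} [Group G] [Finite G] {p : ℕ} [hp : Fact p.Prime] (hG : IsPGroup p G)
    (x : G) (hx : x ^ p ∉ commutator G) :
    IsCyclic G ∨ ∃ z ∈ center G, orderOf z = p ∧ ∃ y, y ^ p ∉ commutator G ⊔ zpowers z := by
  by_cases hab : commutator G = ⊥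
  · rw [hab] at hx ⊢
    rw [mem_bot] at hx
    rw [_root_.commutator_def, commutator_eq_bot_iff_le_centralizer, coe_top, centralizer_univ] at hab
    have hcomm : ∀ a b : G, Commute a b := fun a b => mem_center_iff.1 (hab (mem_top b)) a
    by_contra! hcon
    obtain ⟨hcyc, hcon⟩ := hcon
    simp only [bot_sup_eq] at hcon
    apply hcyc
    have hnt : (⊤ : Subgroup G) ≠ ⊥ := by
      intro h
      apply hx
      rw [← mem_bot, ← h]; trivial
    obtain ⟨z, -, hz, hzo⟩ := exists_central hG ⊤ hnt
    refine ⟨x, fun y => ?_⟩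
    have hxz := zpowers_prime hp.out hzo (hcon z hz hzo x) hx
    have hy := hcon z hz hzo y
    rw [← hxz] at hy
    obtain ⟨j, hj⟩ := hy
    dsimp at hj
    have hw : (y * x ^ (-j)) ^ p = 1 := by
      rw [(hcomm _ _).mul_pow, ← hj, ← zpow_natCast, ← zpow_natCast, ← zpow_mul, ← zpow_mul,
        ← zpow_add]
      have : (p : ℤ) * j + -j * p = 0 := by ring
      rw [this, zpow_zero]
    have hmem : y * x ^ (-j) ∈ zpowers x := by
      by_cases h1 : y * x ^ (-j) = 1
      · rw [h1]; exact one_mem _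
      · have ho := orderOf_eq_prime hw h1
        have h2 := zpowers_prime hp.out ho (hcon _ (hab trivial) ho x) hx
        have h3 : y * x ^ (-j) ∈ zpowers (x ^ p) := h2 ▸ mem_zpowers _
        exact (zpowers_le.2 (pow_mem (mem_zpowers x) p)) h3
    have := mul_mem hmem (zpow_mem (mem_zpowers x) j)
    exact mem_zpowers_iff.1 (by simpa using this)
  · right
    obtain ⟨z, hz, hzc, hzo⟩ := exists_central hG _ hab
    exact ⟨z, hzc, hzo, x, by rwa [sup_eq_left.2 (zpowers_le.2 hz)]⟩

lemma comm_mul_central {Q : Type*} [Group Q] (c u g : Q) (hc : c ∈ center Q) :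
    ⁅c * u, g⁆ = ⁅u, g⁆ := by
  have h1 : ⁅c * u, g⁆ = (c * (u * g * u⁻¹)) * c⁻¹ * g⁻¹ := by
    rw [commutatorElement_def]; group
  rw [h1, ← mem_center_iff.1 hc, commutatorElement_def]; group

lemma three {Q : Type*} [Group Q] (d a b : Q) (ha : ⁅d, a⁆ ∈ center Q) (hb : ⁅d, b⁆ ∈ center Q) :
    d * ⁅a, b⁆ = ⁅a, b⁆ * d := by
  have h1 : d * a * d⁻¹ = ⁅d, a⁆ * a := by rw [commutatorElement_def]; group
  have h2 : d * b * d⁻¹ = ⁅d, b⁆ * b := by rw [commutatorElement_def]; group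
  have h3 : d * ⁅a, b⁆ * d⁻¹ = ⁅d * a * d⁻¹, d * b * d⁻¹⁆ := by
    simp only [commutatorElement_def]; group
  rw [h1, h2, comm_mul_central _ _ _ ha, ← commutatorElement_inv (⁅d, b⁆ * b) a,
    comm_mul_central _ _ _ hb, commutatorElement_inv] at h3
  exact mul_inv_eq_iff_eq_mul.1 h3

lemma mk_comm {F : Type*} [Group F] (R : Subgroup F) [R.Normal] :
    commutator (F ⧸ R) = map (QuotientGroup.mk' R) (commutator F) := by
  rw [_root_.commutator_def, _root_.commutator_def, map_commutator,
    map_top_of_surjective _ (QuotientGroup.mk'_surjective R)]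

lemma comap_comm {F : Type*} [Group F] (R : Subgroup F) [R.Normal] :
    comap (QuotientGroup.mk' R) (commutator (F ⧸ R)) = commutator F ⊔ R := by
  rw [mk_comm, comap_map_eq, QuotientGroup.ker_mk']

lemma lift_N {F : Type*} [Group F] (R : Subgroup F) [R.Normal] {p : ℕ} (s : F)
    (hz : QuotientGroup.mk' R s ∈ center (F ⧸ R)) (hzo : orderOf (QuotientGroup.mk' R s) = p)
    (S : Subgroup F) (hSd : S = comap (QuotientGroup.mk' R) (zpowers (QuotientGroup.mk' R s))) :
    S.Normal ∧ R ≤ S ∧ s ∈ S ∧ R.relIndex S = p ∧ (∀ g, ⁅s, g⁆ ∈ R) ∧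
    (∀ t ∈ S, ∃ r ∈ R, ∃ i : ℤ, t = r * s ^ i) ∧
    ⁅(⊤ : Subgroup F), R⁆.relIndex ⁅(⊤ : Subgroup F), S⁆ =
      ((centralizer {QuotientGroup.mk' ⁅(⊤ : Subgroup F), R⁆ s}).comap
        (QuotientGroup.mk' ⁅(⊤ : Subgroup F), R⁆)).index := by
  have hk : (QuotientGroup.mk' R).ker = R := QuotientGroup.ker_mk' _
  have hn0 : (zpowers (QuotientGroup.mk' R s)).Normal := by
    refine ⟨fun n hn g => ?_⟩
    have hnc : n ∈ center (F ⧸ R) := zpowers_le.2 hz hn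
    rw [mem_center_iff.1 hnc g]
    simpa using hn
  have hn : S.Normal := by rw [hSd]; exact hn0.comap _
  have hsS : s ∈ S := by rw [hSd]; exact mem_zpowers (QuotientGroup.mk' R s)
  have hRS : R ≤ S := by
    rw [hSd]; conv_lhs => rw [← hk]
    exact MonoidHom.ker_le_comap _ _
  have hg : ∀ g, ⁅s, g⁆ ∈ R := by
    intro g
    rw [← hk, MonoidHom.mem_ker, map_commutatorElement, commutatorElement_eq_one_iff_mul_comm]
    exact (mem_center_iff.1 hz _).symm
  have ht : ∀ t ∈ S, ∃ r ∈ R, ∃ i : ℤ, t = r * s ^ i := by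
    intro t ht
    rw [hSd, mem_comap, mem_zpowers_iff] at ht
    obtain ⟨i, hi⟩ := ht
    refine ⟨t * (s ^ i)⁻¹, ?_, i, by group⟩
    rw [← hk, MonoidHom.mem_ker, map_mul, map_inv, map_zpow, hi, mul_inv_cancel]
  refine ⟨hn, hRS, hsS, ?_, hg, ht, key R S s hsS ht hg⟩
  have := relIndex_ker S (QuotientGroup.mk' R)
  rw [hk] at this
  rw [this, hSd, map_comap_eq_self_of_surjective (QuotientGroup.mk'_surjective R),
    Nat.card_zpowers, hzo]

lemma bound {F : Type*} [Group F] {p : ℕ} [hp : Fact p.Prime] : ∀ (m : ℕ) (R : Subgroup F)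
    [R.Normal] (_ : R.index = p ^ m) (x : F) (_ : x ^ p ∉ commutator F ⊔ R),
    ⁅(⊤ : Subgroup F), R⁆.relIndex (commutator F) ≤ p ^ ((m - 1).choose 2) := by
  intro m
  induction m with
  | zero =>
    intro R _ hR x hx
    rw [pow_zero, index_eq_one] at hR
    subst hR
    simp at hx
  | succ a ih =>
    intro R _ hR x hx
    have hcard : Nat.card (F ⧸ R) = p ^ (a + 1) := hR
    have hfin : Finite (F ⧸ R) := Nat.finite_of_card_ne_zero (by
      rw [hcard]; exact pow_ne_zero _ hp.out.ne_zero)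
    have hx' : (QuotientGroup.mk' R x) ^ p ∉ commutator (F ⧸ R) := by
      rwa [← map_pow, ← mem_comap, comap_comm]
    rcases exists_N (IsPGroup.of_card hcard) _ hx' with hc | ⟨z, hz, hzo, y, hy⟩
    · have hle : ⁅(⊤ : Subgroup F), R⁆ ≤ R := commutator_le_right _ _
      have hab := (QuotientGroup.map ⁅(⊤ : Subgroup F), R⁆ R
        (MonoidHom.id F) hle).isMulCommutative_of_isCyclic_of_ker_le_center (by
          intro q hq
          obtain ⟨q, rfl⟩ := QuotientGroup.mk'_surjective _ q
          refine mk_center R ?_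
          rw [← QuotientGroup.ker_mk' R]
          exact hq)
      have : ⁅(⊤ : Subgroup F), R⁆.relIndex (commutator F) = 1 := by
        rw [relIndex_eq_one, _root_.commutator_def, commutator_le]
        intro g _ h _
        rw [← QuotientGroup.ker_mk' ⁅(⊤ : Subgroup F), R⁆, MonoidHom.mem_ker,
          map_commutatorElement, commutatorElement_eq_one_iff_mul_comm]
        exact hab.is_comm.comm _ _
      rw [this]
      exact Nat.one_le_pow _ _ hp.out.pos
    · obtain ⟨s, rfl⟩ := QuotientGroup.mk'_surjective _ z
      obtain ⟨y, rfl⟩ := QuotientGroup.mk'_surjective _ y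
      obtain ⟨S, hSd⟩ : ∃ S, S = comap (QuotientGroup.mk' R) (zpowers (QuotientGroup.mk' R s)) :=
        ⟨_, rfl⟩
      obtain ⟨hn, hRS, hsS, hrel, hg, ht, hkey⟩ := lift_N R s hz hzo S hSd
      have hSi : S.index = p ^ a := by
        have := relIndex_mul_index hRS
        rw [hrel, hR, pow_succ'] at this
        exact Nat.eq_of_mul_eq_mul_left hp.out.pos this
      have hyS : y ^ p ∉ commutator F ⊔ S := by
        intro h
        apply hy
        have := mem_map_of_mem (QuotientGroup.mk' R) h
        rwa [Subgroup.map_sup, ← mk_comm, hSd,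
          map_comap_eq_self_of_surjective (QuotientGroup.mk'_surjective R), map_pow] at this
      have hIH := ih S hSi y hyS
      set C := (centralizer {QuotientGroup.mk' ⁅(⊤ : Subgroup F), R⁆ s}).comap
        (QuotientGroup.mk' ⁅(⊤ : Subgroup F), R⁆) with hC
      have hCm : ∀ c, c ∈ C ↔ QuotientGroup.mk' ⁅(⊤ : Subgroup F), R⁆ c *
          QuotientGroup.mk' ⁅(⊤ : Subgroup F), R⁆ s = QuotientGroup.mk' ⁅(⊤ : Subgroup F), R⁆ s *
          QuotientGroup.mk' ⁅(⊤ : Subgroup F), R⁆ c := by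
        intro c
        rw [hC, mem_comap, mem_centralizer_singleton_iff]
      have hSC : S ≤ C := by
        intro t htS
        obtain ⟨r, hr, i, rfl⟩ := ht t htS
        refine mul_mem ?_ (zpow_mem ?_ i)
        · rw [hCm]; exact (mem_center_iff.1 (mk_center R hr) _).symm
        · rw [hCm]
      have hyC : y ^ p ∈ C := by
        have hu : ∀ g, ⁅QuotientGroup.mk' ⁅(⊤ : Subgroup F), R⁆ s, g⁆ ∈
            center (F ⧸ ⁅(⊤ : Subgroup F), R⁆) := by
          intro g
          obtain ⟨g, rfl⟩ := QuotientGroup.mk'_surjective _ g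
          rw [← map_commutatorElement]
          exact mk_center R (hg g)
        have hsp : s ^ p ∈ R := by
          rw [← QuotientGroup.ker_mk' R, MonoidHom.mem_ker, map_pow, ← hzo, pow_orderOf_eq_one]
        rw [hC, mem_comap, ← cHom_ker _ hu, MonoidHom.mem_ker, map_pow, map_pow]
        change ⁅QuotientGroup.mk' ⁅(⊤ : Subgroup F), R⁆ s,
          QuotientGroup.mk' ⁅(⊤ : Subgroup F), R⁆ y⁆ ^ p = 1
        rw [← zpow_natCast, ← comm_zpow _ _ hu, zpow_natCast, ← map_pow,
          commutatorElement_eq_one_iff_mul_comm]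
        exact (mem_center_iff.1 (mk_center R hsp) _).symm
      have hSC1 : S.relIndex C ≠ 1 := by
        rw [Ne, relIndex_eq_one]
        exact fun h => hyS (mem_sup_right (h hyC))
      have hmul := relIndex_mul_index hSC
      rw [hSi] at hmul
      obtain ⟨j, hj, hj'⟩ := (Nat.dvd_prime_pow hp.out).1 (Dvd.intro _ hmul)
      have hj0 : j ≠ 0 := by rintro rfl; exact hSC1 (by simpa using hj')
      obtain ⟨b, rfl⟩ : ∃ b, a = b + 1 := ⟨a - 1, by omega⟩
      have hCi : C.index ≤ p ^ b := by
        have : p ^ j * C.index = p ^ j * p ^ (b + 1 - j) := by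
          rw [← hj', hmul, hj', ← pow_add]; congr 1; omega
        rw [Nat.eq_of_mul_eq_mul_left (pow_pos hp.out.pos j) this]
        exact Nat.pow_le_pow_right hp.out.pos (by omega)
      have htot := relIndex_mul_relIndex ⁅(⊤ : Subgroup F), R⁆ ⁅(⊤ : Subgroup F), S⁆ (commutator F)
        (commutator_mono le_rfl hRS) (commutator_mono le_rfl le_top)
      rw [← htot, hkey]
      refine (Nat.mul_le_mul hCi hIH).trans_eq ?_
      rw [← pow_add]
      congr 1
      simp [Nat.choose_succ_succ' b 1]

lemma index_centralizer_le {G : Type*} [Group G] [Finite G] (a : G)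
    (h : commutator G ≤ center G) : (centralizer {a}).index ≤ Nat.card (commutator G) := by
  have hu : ∀ g, ⁅a, g⁆ ∈ commutator G := fun g =>
    commutator_mem_commutator (mem_top _) (mem_top _)
  rw [← cHom_ker a (fun g => h (hu g)), index_ker]
  apply card_le_of_le
  rintro _ ⟨g, rfl⟩
  exact hu g

lemma bound_one {F : Type*} [Group F] {p : ℕ} [hp : Fact p.Prime] (n : ℕ) (R : Subgroup F)
    [R.Normal] (hR : R.index = p ^ (n + 1)) (x : F) (hx : x ^ p ∉ commutator F ⊔ R)
    (h1 : R.relIndex (commutator F) = p) :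
    ⁅(⊤ : Subgroup F), R⁆.relIndex (commutator F) ≤ p ^ 2 * p ^ ((n - 1).choose 2) := by
  have hcard : Nat.card (F ⧸ R) = p ^ (n + 1) := hR
  have hfin : Finite (F ⧸ R) := Nat.finite_of_card_ne_zero (by
    rw [hcard]; exact pow_ne_zero _ hp.out.ne_zero)
  have hcG : Nat.card (commutator (F ⧸ R)) = p := by
    rw [mk_comm, ← relIndex_ker, QuotientGroup.ker_mk', h1]
  have hne : commutator (F ⧸ R) ≠ ⊥ := by
    intro h
    rw [h, card_bot] at hcG
    exact hp.out.one_lt.ne hcG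
  obtain ⟨z, hzG, hz, hzo⟩ := exists_central (IsPGroup.of_card hcard) _ hne
  have hGz : zpowers z = commutator (F ⧸ R) := by
    apply eq_of_le_of_card_ge (zpowers_le.2 hzG)
    rw [hcG, Nat.card_zpowers, hzo]
  have hcen : commutator (F ⧸ R) ≤ center (F ⧸ R) := by
    rw [← hGz]; exact zpowers_le.2 hz
  obtain ⟨a, b, hab⟩ : ∃ a b : F ⧸ R, ⁅a, b⁆ ≠ 1 := by
    by_contra! h
    apply hne
    rw [eq_bot_iff, _root_.commutator_def, commutator_le]
    intro g _ g' _
    exact h g g'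
  have habG : ⁅a, b⁆ ∈ commutator (F ⧸ R) := commutator_mem_commutator (mem_top _) (mem_top _)
  obtain ⟨α, rfl⟩ := QuotientGroup.mk'_surjective _ a
  obtain ⟨β, rfl⟩ := QuotientGroup.mk'_surjective _ b
  have hzp := zpowers_prime hp.out hzo (hGz ▸ habG) hab
  have hord : orderOf (QuotientGroup.mk' R ⁅α, β⁆) = p := by
    rw [map_commutatorElement, ← Nat.card_zpowers, hzp, Nat.card_zpowers, hzo]
  have hcc : QuotientGroup.mk' R ⁅α, β⁆ ∈ center (F ⧸ R) := by
    rw [map_commutatorElement]; exact hcen habG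
  have hSd : commutator F ⊔ R =
      comap (QuotientGroup.mk' R) (zpowers (QuotientGroup.mk' R ⁅α, β⁆)) := by
    rw [map_commutatorElement, hzp, hGz, comap_comm]
  obtain ⟨hn, hRS, hsS, hrel, hg, ht, hkey⟩ := lift_N R _ hcc hord _ hSd
  set S := commutator F ⊔ R with hS
  have hSi : S.index = p ^ n := by
    have := relIndex_mul_index hRS
    rw [hrel, hR, pow_succ'] at this
    exact Nat.eq_of_mul_eq_mul_left hp.out.pos this
  have hIH := bound n S hSi x (by rwa [hS, ← sup_assoc, sup_idem])
  have htot := relIndex_mul_relIndex ⁅(⊤ : Subgroup F), R⁆ ⁅(⊤ : Subgroup F), S⁆ (commutator F)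
    (commutator_mono le_rfl hRS) (commutator_mono le_rfl le_top)
  rw [← htot, hkey]
  refine Nat.mul_le_mul ?_ hIH
  let D := comap (QuotientGroup.mk' R)
    (centralizer {QuotientGroup.mk' R α} ⊓ centralizer {QuotientGroup.mk' R β})
  have hDi : D.index ≤ p ^ 2 := by
    rw [index_comap_of_surjective _ (QuotientGroup.mk'_surjective R), pow_two]
    have := Nat.mul_le_mul (index_centralizer_le (QuotientGroup.mk' R α) hcen)
      (index_centralizer_le (QuotientGroup.mk' R β) hcen)
    rw [hcG] at this
    exact index_inf_le.trans this
  have hD0 : D.index ≠ 0 := by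
    rw [index_comap_of_surjective _ (QuotientGroup.mk'_surjective R)]
    exact index_ne_zero_of_finite
  refine (Nat.le_of_dvd (Nat.pos_of_ne_zero hD0) (index_dvd_of_le ?_)).trans hDi
  rintro d ⟨hd1, hd2⟩
  have hh : ∀ γ, QuotientGroup.mk' R d ∈ centralizer {QuotientGroup.mk' R γ} →
      ⁅QuotientGroup.mk' ⁅(⊤ : Subgroup F), R⁆ d, QuotientGroup.mk' ⁅(⊤ : Subgroup F), R⁆ γ⁆ ∈
        center (F ⧸ ⁅(⊤ : Subgroup F), R⁆) := by
    intro γ hγ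
    rw [← map_commutatorElement]
    apply mk_center
    rw [← QuotientGroup.ker_mk' R, MonoidHom.mem_ker, map_commutatorElement,
      commutatorElement_eq_one_iff_mul_comm]
    exact mem_centralizer_singleton_iff.1 hγ
  rw [mem_comap, mem_centralizer_singleton_iff, map_commutatorElement]
  exact three _ _ _ (hh _ hd1) (hh _ hd2)

lemma exists_pow_notMem {G : Type*} [Group G] [Finite G] [Nontrivial G] {p : ℕ} [hp : Fact p.Prime]
    (hG : IsPGroup p G) (hab : Monoid.exponent (Abelianization G) ≠ p) :
    ∃ g : G, g ^ p ∉ commutator G := by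
  by_contra! h
  have hd : Monoid.exponent (Abelianization G) ∣ p := by
    apply Monoid.exponent_dvd_of_forall_pow_eq_one
    intro q
    obtain ⟨q, rfl⟩ : ∃ r, Abelianization.of r = q := QuotientGroup.mk'_surjective _ q
    rw [← map_pow]
    exact (QuotientGroup.eq_one_iff _).2 (h q)
  rcases (Nat.dvd_prime hp.out).1 hd with h1 | h1
  · have hsub := Monoid.exp_eq_one_iff.1 h1
    have hnil := hG.isNilpotent
    have := Group.IsSolvable.commutator_lt_top_of_nontrivial G
    apply this.ne
    rw [eq_top_iff]
    intro g _
    exact (QuotientGroup.eq_one_iff _).1 (hsub.elim (QuotientGroup.mk' (commutator G) g) 1)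
  · exact hab h1

/-- **Lemma 2.** There is no `p`-group of order `p^n` (`n ≥ 5`) with `s(G) = 2` whose
abelianization is not elementary abelian (i.e. does not have exponent `p`). -/
theorem no_s_eq_two_of_abelianization_not_elementary {p n : ℕ} (hp : p.Prime)
    {G : Type*} [Group G] (hG : Nat.card G = p ^ n) (hn : 5 ≤ n)
    (hnab : ∃ a b : G, a * b ≠ b * a)
    (hab : Monoid.exponent (Abelianization G) ≠ p) :
    Nat.card (SchurMultiplier G) ≠ p ^ ((n - 1) * (n - 2) / 2 - 1) := by
  intro hM
  have hpf : Fact p.Prime := ⟨hp⟩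
  have hfin : Finite G := Nat.finite_of_card_ne_zero (by rw [hG]; exact pow_ne_zero _ hp.ne_zero)
  have hP : IsPGroup p G := IsPGroup.of_card hG
  obtain ⟨a, b, hne⟩ := hnab
  have hnt : Nontrivial G := ⟨a * b, b * a, hne⟩
  obtain ⟨g, hg⟩ := exists_pow_notMem hP hab
  have hsurj : Function.Surjective (FreeGroup.lift (id : G → G)) := fun y =>
    ⟨FreeGroup.of y, by simp⟩
  have hRn : (presentationKernel G).Normal := MonoidHom.normal_ker _
  have hRi : (presentationKernel G).index = p ^ n := by
    rw [presentationKernel, index_ker, MonoidHom.range_eq_top.2 hsurj, card_top, hG]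
  have hmap : map (FreeGroup.lift (id : G → G)) (commutator (FreeGroup G)) = commutator G := by
    rw [_root_.commutator_def, _root_.commutator_def, map_commutator,
      map_top_of_surjective _ hsurj]
  have hx : (FreeGroup.of g) ^ p ∉ commutator (FreeGroup G) ⊔ presentationKernel G := by
    intro h
    rw [presentationKernel, ← comap_map_eq, hmap, mem_comap, map_pow] at h
    apply hg
    simpa using h
  have hM' : ⁅(⊤ : Subgroup (FreeGroup G)), presentationKernel G⁆.relIndex
      (presentationKernel G ⊓ commutator (FreeGroup G)) = p ^ ((n - 1) * (n - 2) / 2 - 1) := hM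
  have htot := relIndex_mul_relIndex ⁅(⊤ : Subgroup (FreeGroup G)), presentationKernel G⁆
    (presentationKernel G ⊓ commutator (FreeGroup G)) (commutator (FreeGroup G))
    (le_inf (commutator_le_right _ _) (commutator_mono le_rfl le_top)) inf_le_right
  rw [inf_relIndex_right, hM'] at htot
  obtain ⟨k, -, hk⟩ := (Nat.dvd_prime_pow hp).1
    (hRi ▸ relIndex_dvd_index_of_normal (presentationKernel G) (commutator (FreeGroup G)))
  have hk0 : k ≠ 0 := by
    rintro rfl
    rw [pow_zero, relIndex_eq_one] at hk
    apply hne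
    have := hk (commutator_mem_commutator (mem_top (FreeGroup.of a)) (mem_top (FreeGroup.of b)))
    rw [presentationKernel, MonoidHom.mem_ker, map_commutatorElement,
      commutatorElement_eq_one_iff_mul_comm] at this
    simpa using this
  rw [hk, ← pow_add] at htot
  obtain ⟨c, rfl⟩ : ∃ c, n = c + 5 := ⟨n - 5, by omega⟩
  have hf : (c + 5 - 1) * (c + 5 - 2) / 2 = (c + 3).choose 2 + (c + 3) := by
    have : (c + 5 - 1) * (c + 5 - 2) / 2 = (c + 4).choose 2 := by
      rw [Nat.choose_two_right]; rfl
    rw [this, Nat.choose_succ_succ' (c + 3) 1]; simp [add_comm]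
  have hf' : (c + 5 - 1).choose 2 = (c + 3).choose 2 + (c + 3) := by
    rw [show c + 5 - 1 = c + 3 + 1 by omega, Nat.choose_succ_succ' (c + 3) 1]; simp [add_comm]
  rw [hf] at htot
  by_cases hk1 : k = 1
  · subst hk1
    rw [pow_one] at hk
    have hb := bound_one (c + 4) _ hRi _ hx hk
    rw [← htot, ← pow_add, Nat.pow_le_pow_iff_right hp.one_lt] at hb
    simp only [show c + 4 - 1 = c + 3 by omega] at hb
    omega
  · have hb := bound (c + 5) _ hRi _ hx
    rw [← htot, Nat.pow_le_pow_iff_right hp.one_lt, hf'] at hb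
    omega
end

section
/- Let p be a prime and G a finite p-group of order p^n with |G'| = p and |M(G)| = p^{(n-1)(n-2)/2 - 1}. Then the center Z(G) has exponent at most p^2 (every central element z satisfies z^{p^2} = 1). -/
theorem aux_zpowers_normal {Q : Type*} [Group Q] {z : Q} (hz : z ∈ Subgroup.center Q) :
    (Subgroup.zpowers z).Normal := by
  refine ⟨fun x hx g => ?_⟩
  have hx' : x ∈ Subgroup.center Q := (Subgroup.zpowers_le.mpr hz) hx
  have := Subgroup.mem_center_iff.mp hx' g
  rw [this]
  simpa using hx

theorem aux_card_commutator {E E' : Type*} [Group E] [Group E'] (f : E →* E')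
    (hf : Function.Surjective f) :
    Nat.card (commutator E) = Nat.card (f.ker ⊓ commutator E : Subgroup E) *
      Nat.card (commutator E') := by
  have h1 : (commutator E).map f = commutator E' := by
    rw [commutator_def, commutator_def, Subgroup.map_commutator,
      Subgroup.map_top_of_surjective f hf]
  rw [← h1, ← Subgroup.relIndex_ker, ← Subgroup.inf_relIndex_right f.ker,
    ← Subgroup.relIndex_bot_left, ← Subgroup.relIndex_bot_left,
    Subgroup.relIndex_mul_relIndex _ _ _ bot_le inf_le_right]

theorem aux_step {p m : ℕ} (hp : p.Prime) {E Q : Type u} [Group E] [Group Q] (π : E →* Q)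
    (hπ : Function.Surjective π) (hker : π.ker ≤ Subgroup.center E) (z : Q)
    (hz : z ∈ Subgroup.center Q) (hm : (Subgroup.zpowers z).index = p ^ m)
    (ih : ∀ (E Q : Type u) [Group E] [Group Q] (π : E →* Q), Function.Surjective π →
      π.ker ≤ Subgroup.center E → Nat.card Q = p ^ m →
      Nat.card (commutator E) ≤ p ^ (m * (m - 1) / 2)) :
    Nat.card (commutator E) ≤ p ^ ((m + 1) * m / 2) := by
  obtain ⟨u, rfl⟩ := hπ z
  have hcen : ∀ g : E, g * u * g⁻¹ * u⁻¹ ∈ Subgroup.center E := by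
    intro g
    apply hker
    have := Subgroup.mem_center_iff.mp hz (π g)
    rw [MonoidHom.mem_ker]
    simp [this]
  let φ : E →* E := MonoidHom.mk' (fun g => g * u * g⁻¹ * u⁻¹) (by
    intro a b
    have h := Subgroup.mem_center_iff.mp (hcen b) a
    calc a * b * u * (a * b)⁻¹ * u⁻¹
        = (a * (b * u * b⁻¹ * u⁻¹)) * (u * a⁻¹ * u⁻¹) := by group
      _ = (b * u * b⁻¹ * u⁻¹) * (a * u * a⁻¹ * u⁻¹) := by rw [h]; group
      _ = _ := (Subgroup.mem_center_iff.mp (hcen b) _).symm)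
  have hφ : ∀ g, φ g = g * u * g⁻¹ * u⁻¹ := fun g => rfl
  have hNc : φ.range ≤ Subgroup.center E := by
    rintro _ ⟨g, rfl⟩
    exact hcen g
  have hN : φ.range.Normal := ⟨fun x hx g => by
    rw [Subgroup.mem_center_iff.mp (hNc hx) g]; simpa using hx⟩
  have hZ : (Subgroup.zpowers (π u)).Normal := aux_zpowers_normal hz
  have hB : ∀ b : E, π b ∈ Subgroup.zpowers (π u) →
      ∃ (k : ℤ) (a : E), a ∈ Subgroup.center E ∧ b = u ^ k * a := by
    rintro b ⟨k, hk⟩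
    refine ⟨k, (u ^ k)⁻¹ * b, hker ?_, by group⟩
    rw [MonoidHom.mem_ker]
    simp at hk
    simp [hk]
  -- card N
  have hBle : (Subgroup.zpowers (π u)).comap π ≤ φ.ker := by
    intro b hb
    obtain ⟨k, a, ha, rfl⟩ := hB b hb
    rw [MonoidHom.mem_ker, hφ]
    have h := Subgroup.mem_center_iff.mp ha u
    calc u ^ k * a * u * (u ^ k * a)⁻¹ * u⁻¹
        = u ^ k * (a * u) * a⁻¹ * u ^ (-k) * u⁻¹ := by group
      _ = 1 := by rw [← h]; group
  have hidx : ((Subgroup.zpowers (π u)).comap π).index = p ^ m := by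
    rw [Subgroup.index_comap_of_surjective _ hπ, hm]
  have hpm : 0 < p ^ m := pow_pos hp.pos _
  have hd : Nat.card φ.range ∣ p ^ m := by
    rw [← Subgroup.index_ker, ← hidx]
    exact Subgroup.index_dvd_of_le hBle
  have hNle : Nat.card φ.range ≤ p ^ m := Nat.le_of_dvd hpm hd
  have hNpos : 0 < Nat.card φ.range := Nat.pos_of_dvd_of_pos hd hpm
  have : Finite φ.range := Nat.finite_of_card_ne_zero hNpos.ne'
  -- quotient
  have hle : φ.range ≤ ((QuotientGroup.mk' (Subgroup.zpowers (π u))).comp π).ker := by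
    rintro _ ⟨g, rfl⟩
    have h1 := Subgroup.mem_center_iff.mp hz (π g)
    rw [MonoidHom.mem_ker, hφ]
    simp [h1]
  let π' : E ⧸ φ.range →* Q ⧸ Subgroup.zpowers (π u) :=
    QuotientGroup.lift φ.range ((QuotientGroup.mk' (Subgroup.zpowers (π u))).comp π) hle
  have hπ' : Function.Surjective π' := by
    intro q
    obtain ⟨q, rfl⟩ := QuotientGroup.mk'_surjective _ q
    obtain ⟨e, rfl⟩ := hπ q
    exact ⟨QuotientGroup.mk e, rfl⟩
  have hker' : π'.ker ≤ Subgroup.center (E ⧸ φ.range) := by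
    intro x hx
    obtain ⟨b, rfl⟩ := QuotientGroup.mk'_surjective _ x
    have hb : π b ∈ Subgroup.zpowers (π u) := by
      rw [← QuotientGroup.eq_one_iff]
      exact hx
    obtain ⟨k, a, ha, rfl⟩ := hB b hb
    rw [map_mul, map_zpow]
    refine mul_mem (zpow_mem ?_ k) ?_
    · rw [Subgroup.mem_center_iff]
      intro y
      obtain ⟨g, rfl⟩ := QuotientGroup.mk'_surjective _ y
      have h1 : QuotientGroup.mk' φ.range (φ g) = 1 :=
        (QuotientGroup.eq_one_iff _).mpr ⟨g, rfl⟩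
      rw [hφ] at h1
      simp only [map_mul, map_inv] at h1
      rw [mul_inv_eq_one, mul_inv_eq_iff_eq_mul] at h1
      exact h1
    · rw [Subgroup.mem_center_iff]
      intro y
      obtain ⟨g, rfl⟩ := QuotientGroup.mk'_surjective _ y
      rw [← map_mul, ← map_mul, Subgroup.mem_center_iff.mp ha g]
  have hih := ih _ _ π' hπ' hker' hm
  rw [aux_card_commutator (QuotientGroup.mk' φ.range) (QuotientGroup.mk'_surjective _),
    QuotientGroup.ker_mk']
  have h3 : Nat.card (φ.range ⊓ commutator E : Subgroup E) ≤ p ^ m :=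
    (Subgroup.card_le_of_le inf_le_left).trans hNle
  calc _ ≤ p ^ m * p ^ (m * (m - 1) / 2) := Nat.mul_le_mul h3 hih
    _ = _ := by
      rw [← pow_add]
      congr 1
      rw [add_comm, ← Nat.add_mul_div_left _ _ (by norm_num : 0 < 2)]
      rcases m with _ | m
      · rfl
      · congr 1
        simp
        ring

theorem aux_green {p : ℕ} (hp : p.Prime) (n : ℕ) : ∀ (E Q : Type u) [Group E] [Group Q]
      (π : E →* Q), Function.Surjective π →
      π.ker ≤ Subgroup.center E → Nat.card Q = p ^ n →
      Nat.card (commutator E) ≤ p ^ (n * (n - 1) / 2) := by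
  have : Fact p.Prime := ⟨hp⟩
  induction n with
  | zero =>
    intro E Q _ _ π hπ hker hQ
    have hs : Subsingleton Q := (Nat.card_eq_one_iff_unique.mp (by simpa using hQ)).1
    have htop : Subgroup.center E = ⊤ := by
      rw [eq_top_iff]
      exact fun x _ => hker (Subsingleton.elim _ _)
    have : commutator E = ⊥ := by
      rw [commutator_def, Subgroup.commutator_eq_bot_iff_le_centralizer]
      intro x _
      rw [Subgroup.mem_centralizer_iff]
      intro y _
      exact Subgroup.mem_center_iff.mp (htop ▸ Subgroup.mem_top x) y
    rw [this]
    simp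
  | succ m ih =>
    intro E Q _ _ π hπ hker hQ
    have : Finite Q := Nat.finite_of_card_ne_zero (by rw [hQ]; exact (pow_pos hp.pos _).ne')
    have hPQ : IsPGroup p Q := IsPGroup.of_card hQ
    have : Nontrivial Q := by
      rw [← Finite.one_lt_card_iff_nontrivial, hQ]
      exact Nat.one_lt_pow (by omega) hp.one_lt
    have := hPQ.center_nontrivial
    have hdvd : p ∣ Nat.card (Subgroup.center Q) := by
      obtain ⟨k, hk, h⟩ := (hPQ.to_subgroup (Subgroup.center Q)).nontrivial_iff_card.mp this
      rw [h]
      exact dvd_pow_self _ (by omega)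
    obtain ⟨⟨z, hz⟩, hzo⟩ := exists_prime_orderOf_dvd_card' p hdvd
    rw [Subgroup.orderOf_mk] at hzo
    have hm : (Subgroup.zpowers z).index = p ^ m := by
      have := (Subgroup.zpowers z).card_mul_index
      rw [Nat.card_zpowers, hzo, hQ, pow_succ'] at this
      exact Nat.eq_of_mul_eq_mul_left hp.pos this
    exact aux_step hp π hπ hker z hz hm ih

/-- **Lemma 3, first case.** If `G` is a `p`-group of order `p^n` with `|G'| = p` and
`|M(G)| = p^((n-1)(n-2)/2 - 1)`, then the center of `G` has exponent at most `p^2`. -/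
theorem center_exponent_le_p_sq_of_s_eq_two {p n : ℕ} (hp : p.Prime)
    {G : Type*} [Group G] (hG : Nat.card G = p ^ n)
    (hG' : Nat.card (commutator G) = p)
    (hM : Nat.card (SchurMultiplier G) = p ^ ((n - 1) * (n - 2) / 2 - 1)) :
    ∀ z ∈ Subgroup.center G, z ^ p ^ 2 = 1 := by
  intro z hz
  by_contra hne
  have hdvd : orderOf z ∣ p ^ n := hG ▸ orderOf_dvd_natCard z
  obtain ⟨k, hkn, hk⟩ := (Nat.dvd_prime_pow hp).mp hdvd
  have hk3 : 3 ≤ k := by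
    by_contra hlt
    apply hne
    rw [← orderOf_dvd_iff_pow_eq_one, hk]
    exact pow_dvd_pow _ (by omega)
  set R := presentationKernel G with hR
  have hRn : R.Normal := by rw [hR]; unfold presentationKernel; infer_instance
  set f : FreeGroup G →* G := FreeGroup.lift (id : G → G) with hf
  have hfs : Function.Surjective f := fun g => ⟨FreeGroup.of g, by simp [hf]⟩
  set S : Subgroup (FreeGroup G) := ⁅(⊤ : Subgroup (FreeGroup G)), R⁆ with hS
  have hSR : S ≤ R := Subgroup.commutator_le_right _ _
  have hSF : S ≤ commutator (FreeGroup G) := by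
    rw [commutator_def]; exact Subgroup.commutator_mono le_rfl le_top
  let π : FreeGroup G ⧸ S →* G := QuotientGroup.lift S f hSR
  have hπ : Function.Surjective π := fun g => by
    obtain ⟨x, rfl⟩ := hfs g
    exact ⟨QuotientGroup.mk x, rfl⟩
  have hker : π.ker ≤ Subgroup.center (FreeGroup G ⧸ S) := by
    intro x hx
    obtain ⟨r, rfl⟩ := QuotientGroup.mk'_surjective _ x
    have hr : r ∈ R := hx
    rw [Subgroup.mem_center_iff]
    intro y
    obtain ⟨g, rfl⟩ := QuotientGroup.mk'_surjective _ y
    have h1 : QuotientGroup.mk' S (g * r * g⁻¹ * r⁻¹) = 1 :=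
      (QuotientGroup.eq_one_iff _).mpr
        (Subgroup.commutator_mem_commutator (Subgroup.mem_top g) hr)
    simp only [map_mul, map_inv] at h1
    rw [mul_inv_eq_one, mul_inv_eq_iff_eq_mul] at h1
    exact h1
  have hm : (Subgroup.zpowers z).index = p ^ (n - k) := by
    have := (Subgroup.zpowers z).card_mul_index
    rw [Nat.card_zpowers, hk, hG, ← Nat.add_sub_cancel' hkn, pow_add] at this
    exact Nat.eq_of_mul_eq_mul_left (pow_pos hp.pos _) this
  have hmain := aux_step hp π hπ hker z hz hm (aux_green hp (n - k))
  have hcard : Nat.card (commutator (FreeGroup G ⧸ S)) =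
      p ^ ((n - 1) * (n - 2) / 2 - 1) * p := by
    have h1 : (commutator (FreeGroup G)).map (QuotientGroup.mk' S) =
        commutator (FreeGroup G ⧸ S) := by
      rw [commutator_def, commutator_def, Subgroup.map_commutator,
        Subgroup.map_top_of_surjective _ (QuotientGroup.mk'_surjective S)]
    have h2 : (commutator (FreeGroup G)).map f = commutator G := by
      rw [commutator_def, commutator_def, Subgroup.map_commutator,
        Subgroup.map_top_of_surjective f hfs]
    have h3 : S.relIndex (R ⊓ commutator (FreeGroup G)) = 
        p ^ ((n - 1) * (n - 2) / 2 - 1) := hM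
    have h4 : (R ⊓ commutator (FreeGroup G)).relIndex (commutator (FreeGroup G)) = p := by
      rw [Subgroup.inf_relIndex_right, ← hG', ← h2, ← Subgroup.relIndex_ker]
      rfl
    rw [← h1, ← Subgroup.relIndex_ker, QuotientGroup.ker_mk',
      ← Subgroup.relIndex_mul_relIndex S _ _ (le_inf hSR hSF) inf_le_right, h3, h4]
  rw [hcard, ← pow_succ, Nat.pow_le_pow_iff_right hp.one_lt] at hmain
  obtain ⟨j, rfl⟩ : ∃ j, n = k + j := ⟨n - k, by omega⟩
  obtain ⟨i, rfl⟩ : ∃ i, k = 3 + i := ⟨k - 3, by omega⟩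
  have e1 : 3 + i + j - 1 = i + j + 2 := by omega
  have e2 : 3 + i + j - 2 = i + j + 1 := by omega
  have e3 : 3 + i + j - (3 + i) = j := by omega
  rw [e1, e2, e3] at hmain
  have h5 : (j + 1) * j + 2 ≤ (i + j + 2) * (i + j + 1) := by nlinarith
  omega
end

section
/- Let p be a prime and G a finite p-group of order p^n with |G'| = p^2 and |M(G)| = p^{(n-1)(n-2)/2 - 1}. Then the center Z(G) is elementary abelian (has exponent p). -/
open scoped commutatorElement in
theorem SM_step {E G : Type*} [Group E] [Group G] (f : E →* G) (hf : Function.Surjective f)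
    (hk : f.ker ≤ Subgroup.center E) (z : G) (hz : z ∈ Subgroup.center G) :
    ∃ (D : Subgroup E) (_ : D.Normal),
      Nat.card D ∣ (Subgroup.zpowers z).index ∧ Nat.card D ∣ (commutator G).index ∧
      (Subgroup.center (E ⧸ D)).index ∣ (Subgroup.zpowers z).index ∧
      Nat.card (commutator E) = Nat.card D * Nat.card (commutator (E ⧸ D)) := by
  obtain ⟨x, rfl⟩ := hf z
  have hx : ∀ e : E, ⁅e, x⁆ ∈ Subgroup.center E := by
    intro e
    apply hk
    rw [MonoidHom.mem_ker, map_commutatorElement, commutatorElement_eq_one_iff_mul_comm]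
    exact Subgroup.mem_center_iff.1 hz _
  let φ : E →* Subgroup.center E :=
    { toFun := fun e => ⟨⁅e, x⁆, hx e⟩
      map_one' := by ext; simp
      map_mul' := by
        intro a b
        ext
        have h := Subgroup.mem_center_iff.1 (hx b) a
        change ⁅a * b, x⁆ = ⁅a, x⁆ * ⁅b, x⁆
        have h2 : ⁅a * b, x⁆ = a * ⁅b, x⁆ * (x * a⁻¹ * x⁻¹) := by
          simp only [commutatorElement_def]; group
        rw [h2, h, Subgroup.mem_center_iff.1 (hx b) ⁅a, x⁆]
        simp only [commutatorElement_def]; group }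
  have hφ : ∀ e, φ e = 1 ↔ e * x = x * e := by
    intro e
    rw [← commutatorElement_eq_one_iff_mul_comm, Subtype.ext_iff]
    rfl
  have hzero : f.ker ≤ φ.ker := by
    intro e he
    rw [MonoidHom.mem_ker, hφ]
    exact (Subgroup.mem_center_iff.1 (hk he) x).symm
  have h1 : (Subgroup.zpowers (f x)).comap f ≤ φ.ker := by
    rintro s hs
    obtain ⟨k, hk'⟩ := Subgroup.mem_zpowers_iff.1 (Subgroup.mem_comap.1 hs)
    have h3 : s * (x ^ k)⁻¹ ∈ φ.ker := hzero (by simp [MonoidHom.mem_ker, hk'])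
    have h4 : x ^ k ∈ φ.ker := by
      apply Subgroup.zpow_mem
      rw [MonoidHom.mem_ker, hφ]
    simpa using mul_mem h3 h4
  have h2 : (commutator G).comap f ≤ φ.ker := by
    rintro s hs
    have hm2 : commutator G = (commutator E).map f := by
      rw [commutator_def, commutator_def, Subgroup.map_commutator,
        Subgroup.map_top_of_surjective _ hf]
    rw [Subgroup.mem_comap, hm2] at hs
    obtain ⟨c, hc, hcs⟩ := hs
    have h3 : s * c⁻¹ ∈ φ.ker := hzero (by simp [MonoidHom.mem_ker, hcs])
    have h5 : commutator E ≤ φ.ker := by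
      rw [commutator_def, Subgroup.commutator_le]
      intro a _ b _
      rw [MonoidHom.mem_ker, map_commutatorElement, commutatorElement_eq_one_iff_mul_comm]
      exact Subtype.ext (Subgroup.mem_center_iff.1 (φ b).2 (φ a))
    have h4 : c ∈ φ.ker := h5 hc
    simpa using mul_mem h3 h4
  let D : Subgroup E := φ.range.map (Subgroup.center E).subtype
  have hDc : D ≤ Subgroup.center E := by
    rintro _ ⟨y, _, rfl⟩
    exact y.2
  have hDn : D.Normal := ⟨fun d hd g => by
    have := Subgroup.mem_center_iff.1 (hDc hd) g
    rw [this]; simpa using hd⟩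
  have hcard : Nat.card D = φ.ker.index := by
    rw [Subgroup.index_ker]
    exact Subgroup.card_map_of_injective (Subgroup.subtype_injective (Subgroup.center E))
  have hDx : ∀ e : E, ⁅e, x⁆ ∈ D := fun e => ⟨φ e, ⟨e, rfl⟩, rfl⟩
  have hDE : D ≤ commutator E := by
    rintro _ ⟨_, ⟨e, rfl⟩, rfl⟩
    exact Subgroup.commutator_mem_commutator (Subgroup.mem_top e) (Subgroup.mem_top x)
  refine ⟨D, hDn, ?_, ?_, ?_, ?_⟩
  · rw [hcard, ← Subgroup.index_comap_of_surjective _ hf]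
    exact Subgroup.index_dvd_of_le h1
  · rw [hcard, ← Subgroup.index_comap_of_surjective (commutator G) hf]
    exact Subgroup.index_dvd_of_le h2
  · rw [← Subgroup.index_comap_of_surjective _ hf,
      ← Subgroup.index_comap_of_surjective _ (QuotientGroup.mk'_surjective D)]
    apply Subgroup.index_dvd_of_le
    rintro s hs
    obtain ⟨k, hk'⟩ := Subgroup.mem_zpowers_iff.1 (Subgroup.mem_comap.1 hs)
    have h3 : s * (x ^ k)⁻¹ ∈ (Subgroup.center (E ⧸ D)).comap (QuotientGroup.mk' D) := by
      have : s * (x ^ k)⁻¹ ∈ Subgroup.center E := hk (by simp [MonoidHom.mem_ker, hk'])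
      rw [Subgroup.mem_comap, Subgroup.mem_center_iff]
      intro g
      obtain ⟨g, rfl⟩ := QuotientGroup.mk'_surjective D g
      rw [← map_mul, ← map_mul, Subgroup.mem_center_iff.1 this]
    have h4 : x ^ k ∈ (Subgroup.center (E ⧸ D)).comap (QuotientGroup.mk' D) := by
      apply Subgroup.zpow_mem
      rw [Subgroup.mem_comap, Subgroup.mem_center_iff]
      intro g
      obtain ⟨g, rfl⟩ := QuotientGroup.mk'_surjective D g
      rw [← commutatorElement_eq_one_iff_mul_comm, ← map_commutatorElement]
      exact (QuotientGroup.eq_one_iff _).2 (hDx g)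
    simpa using mul_mem h3 h4
  · have hm : commutator (E ⧸ D) = (commutator E).map (QuotientGroup.mk' D) := by
      rw [commutator_def, commutator_def, Subgroup.map_commutator,
        Subgroup.map_top_of_surjective _ (QuotientGroup.mk'_surjective D)]
    have h5 := Subgroup.relIndex_ker (QuotientGroup.mk' D) (K := commutator E)
    rw [QuotientGroup.ker_mk'] at h5
    rw [hm, ← h5, ← Subgroup.relIndex_bot_left D, Subgroup.relIndex_mul_relIndex _ _ _ bot_le hDE,
      Subgroup.relIndex_bot_left]

theorem SM_wiegold {p : ℕ} (hp : p.Prime) (n : ℕ) : ∀ (E : Type u) [Group E],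
    (Subgroup.center E).index ∣ p ^ n → Nat.card (commutator E) ∣ p ^ (n * (n - 1) / 2) := by
  induction n with
  | zero =>
    intro E _ h
    have : Subgroup.center E = ⊤ := by simpa using h
    have h2 : commutator E = ⊥ := (commutator_eq_bot_iff_center_eq_top E).2 this
    simp [h2]
  | succ n ih =>
    intro E _ h
    by_cases hc : Subgroup.center E = ⊤
    · have h2 : commutator E = ⊥ := (commutator_eq_bot_iff_center_eq_top E).2 hc
      simp [h2]
    have := Fact.mk hp
    obtain ⟨m, hm, hm'⟩ := (Nat.dvd_prime_pow hp).1 h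
    have hcard : Nat.card (E ⧸ Subgroup.center E) = p ^ m := hm'
    have hpg : IsPGroup p (E ⧸ Subgroup.center E) := IsPGroup.of_card hcard
    have : Finite (E ⧸ Subgroup.center E) :=
      Nat.finite_of_card_ne_zero (by rw [hcard]; exact pow_ne_zero _ hp.ne_zero)
    have : Nontrivial (E ⧸ Subgroup.center E) := by
      rw [← Finite.one_lt_card_iff_nontrivial]
      have : (Subgroup.center E).index ≠ 1 := by simpa using hc
      have h0 : (Subgroup.center E).index ≠ 0 := by rw [hm']; exact pow_ne_zero _ hp.ne_zero
      change 1 < (Subgroup.center E).index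
      omega
    have := hpg.center_nontrivial
    obtain ⟨⟨z, hz⟩, hz1⟩ := exists_ne (1 : Subgroup.center (E ⧸ Subgroup.center E))
    have hz1 : z ≠ 1 := fun h => hz1 (Subtype.ext h)
    obtain ⟨D, hDn, h1, -, h3, h4⟩ := SM_step (QuotientGroup.mk' (Subgroup.center E))
      (QuotientGroup.mk'_surjective _) (by rw [QuotientGroup.ker_mk']) z hz
    have hi : (Subgroup.zpowers z).index ∣ p ^ n := by
      have h5 := Subgroup.index_mul_card (Subgroup.zpowers z)
      rw [hcard] at h5
      obtain ⟨j, hj, hj'⟩ := (Nat.dvd_prime_pow hp).1 (Dvd.intro _ h5)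
      rw [hj']
      apply pow_dvd_pow
      by_contra hjn
      have : j = m := by omega
      subst this
      rw [hj'] at h5
      have := (Nat.mul_eq_left (pow_ne_zero _ hp.ne_zero)).1 h5
      rw [Nat.card_zpowers, orderOf_eq_one_iff] at this
      exact hz1 this
    have h6 := ih (E ⧸ D) (h3.trans hi)
    rw [h4]
    have h7 : (n + 1) * (n + 1 - 1) / 2 = n + n * (n - 1) / 2 := by
      rw [Nat.triangle_succ n]; omega
    rw [h7, pow_add]
    exact mul_dvd_mul (h1.trans hi) h6

/-- **Lemma 3, second case.** If `G` is a `p`-group of order `p^n` with `|G'| = p^2` and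
`|M(G)| = p^((n-1)(n-2)/2 - 1)`, then the center of `G` is elementary abelian
(has exponent `p`). -/
theorem center_elementary_of_s_eq_two {p n : ℕ} (hp : p.Prime)
    {G : Type*} [Group G] (hG : Nat.card G = p ^ n)
    (hG' : Nat.card (commutator G) = p ^ 2)
    (hM : Nat.card (SchurMultiplier G) = p ^ ((n - 1) * (n - 2) / 2 - 1)) :
    ∀ z ∈ Subgroup.center G, z ^ p = 1 := by
  intro z hz
  by_contra hzp
  let F := FreeGroup G
  let π : F →* G := FreeGroup.lift (id : G → G)
  have hπ : Function.Surjective π := fun g => ⟨FreeGroup.of g, FreeGroup.lift_apply_of⟩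
  let C : Subgroup F := ⁅(⊤ : Subgroup F), presentationKernel G⁆
  have hRn : (presentationKernel G).Normal := MonoidHom.normal_ker _
  have hCn : C.Normal := Subgroup.commutator_normal _ _
  have hCR : C ≤ presentationKernel G := Subgroup.commutator_le_right _ _
  have hCF : C ≤ commutator F := Subgroup.commutator_mono le_rfl le_top
  have hC : ∀ g ∈ C, π g = 1 := fun g hg => hCR hg
  let f : F ⧸ C →* G := QuotientGroup.lift C π hC
  have hf : Function.Surjective f := fun g => by
    obtain ⟨a, rfl⟩ := hπ g
    exact ⟨QuotientGroup.mk' C a, rfl⟩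
  have hk : f.ker ≤ Subgroup.center (F ⧸ C) := by
    intro e he
    obtain ⟨e, rfl⟩ := QuotientGroup.mk'_surjective C e
    have he' : e ∈ presentationKernel G := he
    rw [Subgroup.mem_center_iff]
    intro g
    obtain ⟨g, rfl⟩ := QuotientGroup.mk'_surjective C g
    rw [← commutatorElement_eq_one_iff_mul_comm, ← map_commutatorElement]
    exact (QuotientGroup.eq_one_iff _).2
      (Subgroup.commutator_mem_commutator (Subgroup.mem_top g) he')
  obtain ⟨D, hDn, -, h2, h3, h4⟩ := SM_step f hf hk z hz
  have hz2 : (Subgroup.zpowers z).index ∣ p ^ (n - 2) := by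
    have h5 := Subgroup.index_mul_card (Subgroup.zpowers z)
    rw [hG, Nat.card_zpowers] at h5
    obtain ⟨j, hj, hj'⟩ := (Nat.dvd_prime_pow hp).1 (Dvd.intro_left _ h5)
    obtain ⟨i, hi, hi'⟩ := (Nat.dvd_prime_pow hp).1 (Dvd.intro _ h5)
    rw [hi', hj', ← pow_add] at h5
    have h6 := Nat.pow_right_injective hp.two_le h5
    have h7 : 2 ≤ j := by
      by_contra hlt
      apply hzp
      rw [← orderOf_dvd_iff_pow_eq_one, hj']
      exact (pow_dvd_pow p (by omega : j ≤ 1)).trans (by simp)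
    rw [hi']
    exact pow_dvd_pow _ (by omega)
  have hG2 : (commutator G).index ∣ p ^ (n - 2) := by
    have h5 := Subgroup.index_mul_card (commutator G)
    rw [hG, hG'] at h5
    obtain ⟨i, hi, hi'⟩ := (Nat.dvd_prime_pow hp).1 (Dvd.intro _ h5)
    rw [hi', ← pow_add] at h5
    have h6 := Nat.pow_right_injective hp.two_le h5
    rw [hi']
    exact pow_dvd_pow _ (by omega)
  have hW := SM_wiegold hp (n - 2) _ (h3.trans hz2)
  have hdvd := mul_dvd_mul (h2.trans hG2) hW
  rw [← h4, ← pow_add] at hdvd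
  have hcard : Nat.card (commutator (F ⧸ C)) = p ^ ((n - 1) * (n - 2) / 2 - 1) * p ^ 2 := by
    have hm : commutator (F ⧸ C) = (commutator F).map (QuotientGroup.mk' C) := by
      rw [commutator_def, commutator_def, Subgroup.map_commutator,
        Subgroup.map_top_of_surjective _ (QuotientGroup.mk'_surjective C)]
    have hm2 : commutator G = (commutator F).map π := by
      rw [commutator_def, commutator_def, Subgroup.map_commutator,
        Subgroup.map_top_of_surjective _ hπ]
    have h5 := Subgroup.relIndex_ker (QuotientGroup.mk' C) (K := commutator F)
    rw [QuotientGroup.ker_mk'] at h5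
    have h6 := Subgroup.relIndex_ker π (K := commutator F)
    rw [← hm2, hG'] at h6
    rw [hm, ← h5, ← Subgroup.relIndex_mul_relIndex C (presentationKernel G ⊓ commutator F)
      (commutator F) (le_inf hCR hCF) inf_le_right, Subgroup.inf_relIndex_right, ← hM, ← h6]
    rfl
  rw [hcard, ← pow_add, Nat.pow_dvd_pow_iff_le_right hp.one_lt] at hdvd
  have h8 : n - 1 = n - 2 + 1 ∨ n - 2 = 0 := by omega
  rcases h8 with h8 | h8
  · have := Nat.triangle_succ (n - 2)
    rw [Nat.add_sub_cancel] at this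
    rw [h8] at hdvd
    omega
  · simp [h8] at hdvd
end

section
/- Let p be a prime and G a non-abelian p-group of order p^n such that G/G' is elementary abelian, |G'| = p, Z(G) has order at least p^3 and exponent exactly p^2, and |M(G)| = p^{(n-1)(n-2)/2 - 1}. Then G ≅ E(2) × Z, where E(2) is a central product of an extraspecial p-group with a cyclic group of order p^2 amalgamating centers and Z is an elementary abelian p-group. -/
/-- `E` is a group of type `E(2)` (with parameter `m`): a central product of an
extraspecial `p`-group `H` of order `p^(2m+1)` with a cyclic group `K` of order
`p^2`, amalgamated over the center of `H`: `H` and `K` commute elementwise,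
`E = HK` and `H ⊓ K = Z(H)`. -/
def IsTypeE2 (p m : ℕ) (E : Type*) [Group E] : Prop :=
  ∃ H K : Subgroup E,
    IsExtraspecial p H ∧ Nat.card H = p ^ (2 * m + 1) ∧
    IsCyclic K ∧ Nat.card K = p ^ 2 ∧
    (∀ h ∈ H, ∀ k ∈ K, h * k = k * h) ∧
    H ⊔ K = ⊤ ∧ (H ⊓ K).subgroupOf H = Subgroup.center H

section AuxClass
open scoped commutatorElement

theorem aux_compl_comm {A : Type*} [CommGroup A] {p : ℕ} (hp : p.Prime) (h : ∀ x : A, x ^ p = 1)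
    (S : Subgroup A) : ∃ T : Subgroup A, IsCompl S T := by
  have := Fact.mk hp
  let : Module (ZMod p) (Additive A) := AddCommGroup.zmodModule (n := p) (fun x => h x.toMul)
  let e : Subgroup A ≃o Submodule (ZMod p) (Additive A) :=
    Subgroup.toAddSubgroup.trans (AddSubgroup.toZModSubmodule p)
  have : ComplementedLattice (Subgroup A) := e.complementedLattice_iff.2 inferInstance
  exact exists_isCompl S

theorem aux_compl {G : Type*} [Group G] {p : ℕ} (hp : p.Prime) (C S : Subgroup G)
    (hc : ∀ a b : G, ⁅a, b⁆ ∈ C) (hpow : ∀ a : G, a ^ p ∈ C) :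
    ∃ T : Subgroup G, C ≤ T ∧ (∀ x ∈ S, x ∈ T → x ∈ C) ∧
      ∀ g : G, ∃ s ∈ S, ∃ t ∈ T, g = s * t := by
  have hN : C.Normal := ⟨fun n hn g => by
    have := C.mul_mem (hc g n) hn
    simpa [commutatorElement_def] using this⟩
  let : CommGroup (G ⧸ C) := { (inferInstance : Group (G ⧸ C)) with
    mul_comm := fun a b => by
      induction a using QuotientGroup.induction_on with | _ a => ?_
      induction b using QuotientGroup.induction_on with | _ b => ?_
      rw [← QuotientGroup.mk_mul, ← QuotientGroup.mk_mul, QuotientGroup.eq]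
      have := hc b⁻¹ a⁻¹
      simpa [commutatorElement_def, mul_assoc] using this }
  obtain ⟨T, hT⟩ := aux_compl_comm hp (A := G ⧸ C) (fun x => by
    induction x using QuotientGroup.induction_on with | _ a => ?_
    rw [← QuotientGroup.mk_pow]
    exact (QuotientGroup.eq_one_iff _).2 (hpow a)) (S.map (QuotientGroup.mk' C))
  refine ⟨T.comap (QuotientGroup.mk' C), ?_, ?_, ?_⟩
  · intro x hx
    have : (QuotientGroup.mk' C) x = 1 := (QuotientGroup.eq_one_iff _).2 hx
    rw [Subgroup.mem_comap, this]; exact T.one_mem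
  · intro x hx hxT
    have := (Subgroup.disjoint_def.1 hT.disjoint) (Subgroup.mem_map_of_mem (QuotientGroup.mk' C) hx) hxT
    exact (QuotientGroup.eq_one_iff _).1 this
  · intro g
    have : (QuotientGroup.mk' C) g ∈ S.map (QuotientGroup.mk' C) ⊔ T := by
      rw [hT.sup_eq_top]; trivial
    obtain ⟨y, hy, t, ht, h⟩ := Subgroup.mem_sup.1 this
    obtain ⟨s, hs, rfl⟩ := hy
    refine ⟨s, hs, s⁻¹ * g, ?_, by group⟩
    rw [Subgroup.mem_comap, map_mul, map_inv, ← h]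
    simpa using ht

theorem aux_gen {G : Type*} [Group G] {p : ℕ} (hp : p.Prime) (C : Subgroup G)
    (hC : Nat.card C = p) {c : G} (hc : c ∈ C) (h1 : c ≠ 1) : C = Subgroup.zpowers c := by
  have := Fact.mk hp
  have : Finite C := Nat.finite_of_card_ne_zero (by rw [hC]; exact hp.ne_zero)
  symm
  apply Subgroup.eq_of_le_of_card_ge (by simpa using hc)
  rw [hC, Nat.card_zpowers]
  have h2 : orderOf c ∣ p := by rw [← hC]; exact Subgroup.orderOf_dvd_natCard C hc
  rcases (Nat.dvd_prime hp).1 h2 with h | h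
  · exact absurd (orderOf_eq_one_iff.1 h) h1
  · exact h.ge

/-- commutator homomorphism -/
noncomputable def auxHom {G : Type*} [Group G] (hc : ∀ a b : G, ⁅a, b⁆ ∈ Subgroup.center G) (x : G) :
    G →* Subgroup.center G where
  toFun k := ⟨⁅k, x⁆, hc k x⟩
  map_one' := by simp
  map_mul' a b := by
    ext
    have := (Subgroup.mem_center_iff.1 (hc b x)) a
    show ⁅a * b, x⁆ = ⁅a, x⁆ * ⁅b, x⁆
    have h2 := (Subgroup.mem_center_iff.1 (hc b x)) ⁅a, x⁆
    rw [h2]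
    have : ⁅a * b, x⁆ = a * ⁅b, x⁆ * a⁻¹ * ⁅a, x⁆ := by simp [commutatorElement_def, mul_assoc]
    rw [this, (Subgroup.mem_center_iff.1 (hc b x)) a]; group

theorem aux_even {p : ℕ} (hp : p.Prime) (N : ℕ) : ∀ {G : Type*} [Group G] [Finite G]
    (hc : ∀ a b : G, ⁅a, b⁆ ∈ Subgroup.center G) (hZ : Nat.card (Subgroup.center G) = p)
    (hN : Nat.card G = N), ∃ m : ℕ, Nat.card G = p ^ (2 * m + 1) := by
  induction N using Nat.strong_induction_on with | _ N ih => ?_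
  intro G _ _ hc hZ hN
  by_cases hab : ∀ x : G, x ∈ Subgroup.center G
  · refine ⟨0, ?_⟩
    have : Subgroup.center G = ⊤ := by ext; simp [hab]
    rw [this, Subgroup.card_top] at hZ
    simpa using hZ
  push Not at hab
  obtain ⟨x, hx⟩ := hab
  rw [Subgroup.mem_center_iff] at hx
  push Not at hx
  obtain ⟨y, hy⟩ := hx
  have hyx : ⁅y, x⁆ ≠ 1 := fun h => hy (commutatorElement_eq_one_iff_mul_comm.1 h)
  have hxy : ⁅x, y⁆ ≠ 1 := fun h => hy (commutatorElement_eq_one_iff_mul_comm.1 h).symm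
  have g1 := aux_gen hp _ hZ (hc y x) hyx
  have g2 := aux_gen hp _ hZ (hc x y) hxy
  let φ : G →* Subgroup.center G × Subgroup.center G := (auxHom hc x).prod (auxHom hc y)
  have hφx : ∀ g, φ g = 1 ↔ Commute g x ∧ Commute g y := by
    intro g
    show (auxHom hc x g, auxHom hc y g) = 1 ↔ _
    rw [Prod.mk_eq_one, ← commutatorElement_eq_one_iff_commute,
      ← commutatorElement_eq_one_iff_commute]
    simp [auxHom, Subtype.ext_iff]
  have hsol : ∀ u v : Subgroup.center G, ∃ i j : ℤ, φ (y ^ i * x ^ j) = (u, v) := by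
    rintro ⟨u, hu⟩ ⟨v, hv⟩
    have hu' := hu
    have hv' := hv
    rw [g1] at hu'
    rw [g2] at hv'
    obtain ⟨i, rfl⟩ := hu'
    obtain ⟨j, rfl⟩ := hv'
    refine ⟨i, j, ?_⟩
    rw [map_mul, map_zpow, map_zpow]
    ext <;> simp [φ, auxHom]
  have hsurj : Function.Surjective φ := by
    rintro ⟨u, v⟩
    obtain ⟨i, j, h⟩ := hsol u v
    exact ⟨_, h⟩
  have hcard : Nat.card G = Nat.card φ.ker * p ^ 2 := by
    rw [Subgroup.card_eq_card_quotient_mul_card_subgroup φ.ker,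
      Nat.card_congr (QuotientGroup.quotientKerEquivOfSurjective φ hsurj).toEquiv, Nat.card_prod, hZ]
    ring
  have hcen : (Subgroup.center φ.ker).map φ.ker.subtype = Subgroup.center G := by
    ext g
    constructor
    · rintro ⟨⟨k, hk⟩, hkc, rfl⟩
      have hk' := (hφx k).1 hk
      rw [SetLike.mem_coe, Subgroup.mem_center_iff] at hkc
      rw [Subgroup.mem_center_iff]
      intro g
      obtain ⟨i, j, h⟩ := hsol (φ g).1 (φ g).2
      have hw : g * (y ^ i * x ^ j)⁻¹ ∈ φ.ker := by
        rw [MonoidHom.mem_ker, map_mul, map_inv, h]; simp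
      have h1 : Commute (g * (y ^ i * x ^ j)⁻¹) k := congrArg Subtype.val (hkc ⟨_, hw⟩)
      have h2 : Commute (y ^ i * x ^ j) k :=
        ((hk'.2.symm.zpow_left i).mul_left (hk'.1.symm.zpow_left j))
      have h3 := h1.mul_left h2
      rw [inv_mul_cancel_right] at h3
      exact h3.eq
    · intro hg
      have hk : g ∈ φ.ker := by
        rw [MonoidHom.mem_ker, hφx]
        exact ⟨((Subgroup.mem_center_iff.1 hg) x).symm, ((Subgroup.mem_center_iff.1 hg) y).symm⟩
      refine ⟨⟨g, hk⟩, ?_, rfl⟩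
      rw [SetLike.mem_coe, Subgroup.mem_center_iff]
      intro k
      ext
      exact (Subgroup.mem_center_iff.1 hg) k
  obtain ⟨m, hm⟩ := ih (Nat.card φ.ker) (by
      rw [← hN, hcard]
      have : 0 < Nat.card φ.ker := Nat.card_pos
      have h2 := Nat.one_lt_pow two_ne_zero hp.one_lt
      nlinarith) (G := φ.ker) (by
      intro a b
      rw [Subgroup.mem_center_iff]
      intro k
      ext
      exact (Subgroup.mem_center_iff.1 (hc a b)) k) (by
      rw [← hZ, ← Subgroup.card_map_of_injective φ.ker.subtype_injective]
      exact congrArg (fun S : Subgroup G => Nat.card S) hcen) rfl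
  exact ⟨m + 1, by rw [hcard, hm]; ring⟩

theorem aux_ident {G : Type*} [Group G] (m c m' c' : G) (h2 : ∀ g, Commute c g)
    (h3 : ∀ g, Commute c' g) : ⁅m * c, m' * c'⁆ = ⁅m, m'⁆ := by
  rw [commutatorElement_def, commutatorElement_def, mul_inv_rev, mul_inv_rev]
  have e1 : m * c * (m' * c') * (c⁻¹ * m⁻¹) = m * m' * m⁻¹ * c' := by
    rw [mul_assoc m c, (h2 (m' * c')).eq, mul_assoc m, mul_assoc (m' * c'),
      mul_inv_cancel_left, mul_assoc m', (h3 m⁻¹).eq]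
    simp only [mul_assoc]
  rw [e1]
  simp only [mul_assoc, mul_inv_cancel_left]

theorem aux_frat {G : Type*} [Group G] (a b : G)
    (hgen : Subgroup.center G = Subgroup.zpowers ⁅a, b⁆) : Subgroup.center G ≤ frattini G := by
  rw [frattini, Order.radical]
  refine le_iInf₂ fun M hM => ?_
  by_contra hle
  have hsup : M ⊔ Subgroup.center G = ⊤ :=
    hM.2 _ (lt_of_le_of_ne le_sup_left fun h => hle (h ▸ le_sup_right))
  apply hle
  rw [hgen, Subgroup.zpowers_le]
  have ha : a ∈ M ⊔ Subgroup.center G := by rw [hsup]; trivial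
  have hb : b ∈ M ⊔ Subgroup.center G := by rw [hsup]; trivial
  obtain ⟨m, hm, c, hcc, rfl⟩ := Subgroup.mem_sup_of_normal_right.1 ha
  obtain ⟨m', hm', c', hcc', rfl⟩ := Subgroup.mem_sup_of_normal_right.1 hb
  have h2 : ∀ g, Commute c g := fun g => ((Subgroup.mem_center_iff.1 hcc) g).symm
  have h3 : ∀ g, Commute c' g := fun g => ((Subgroup.mem_center_iff.1 hcc') g).symm
  rw [aux_ident m c m' c' h2 h3, commutatorElement_def]
  exact M.mul_mem (M.mul_mem (M.mul_mem hm hm') (M.inv_mem hm)) (M.inv_mem hm')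

theorem aux_E2 {p : ℕ} (hp : p.Prime) {E : Type*} [Group E] [Finite E] (C : Subgroup E)
    (hC : Nat.card C = p) (hc : ∀ a b : E, ⁅a, b⁆ ∈ C) (hpow : ∀ a : E, a ^ p ∈ C)
    (hnab : ∃ a b : E, a * b ≠ b * a) (z : E) (hz : Subgroup.center E = Subgroup.zpowers z)
    (hzp : z ^ p ≠ 1) : ∃ m, IsTypeE2 p m E := by
  have := Fact.mk hp
  have hCz := aux_gen hp C hC (hpow z) hzp
  have hCc : C ≤ Subgroup.center E := by
    rw [hz, hCz, Subgroup.zpowers_le]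
    exact pow_mem (Subgroup.mem_zpowers z) p
  have hzpp : z ^ p ^ 2 = 1 := by
    rw [pow_two, pow_mul]
    apply orderOf_dvd_iff_pow_eq_one.1
    rw [← hC]
    exact Subgroup.orderOf_dvd_natCard C (by rw [hC]; exact hpow z)
  obtain ⟨H, hCH, hint, hprod⟩ := aux_compl hp C (Subgroup.center E) hc hpow
  have hcen : Subgroup.center H = C.subgroupOf H := by
    ext ⟨h, hh⟩
    rw [Subgroup.mem_subgroupOf, Subgroup.mem_center_iff]
    constructor
    · intro hx
      refine hint h ?_ hh
      rw [Subgroup.mem_center_iff]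
      intro g
      obtain ⟨s, hs, t, ht, rfl⟩ := hprod g
      have h1 : Commute t h := congrArg Subtype.val (hx ⟨t, ht⟩)
      have h2 : Commute s h := ((Subgroup.mem_center_iff.1 hs) h).symm
      exact (h2.mul_left h1).eq
    · intro hx k
      ext
      exact (Subgroup.mem_center_iff.1 (hCc hx)) k
  have hcard : Nat.card (Subgroup.center H) = p := by
    rw [hcen, ← hC]
    exact Nat.card_congr (Subgroup.subgroupOfEquivOfLe hCH).toEquiv
  have hcH : ∀ a b : H, ⁅a, b⁆ ∈ Subgroup.center H := by
    intro a b
    rw [hcen, Subgroup.mem_subgroupOf]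
    exact hc a b
  have hnabH : ∃ a b : H, ⁅a, b⁆ ≠ 1 := by
    by_contra hcon
    push Not at hcon
    obtain ⟨a, b, hab⟩ := hnab
    apply hab
    obtain ⟨s, hs, t, ht, rfl⟩ := hprod a
    obtain ⟨s', hs', t', ht', rfl⟩ := hprod b
    have h1 : Commute t t' :=
      congrArg Subtype.val (commutatorElement_eq_one_iff_mul_comm.1 (hcon ⟨t, ht⟩ ⟨t', ht'⟩))
    have h2 : ∀ g, Commute s g := fun g => ((Subgroup.mem_center_iff.1 hs) g).symm
    have h3 : ∀ g, Commute s' g := fun g => ((Subgroup.mem_center_iff.1 hs') g).symm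
    exact ((h2 _).mul_left ((h3 t).symm.mul_right h1)).eq
  obtain ⟨a, b, hab⟩ := hnabH
  have hgen := aux_gen hp _ hcard (hcH a b) hab
  have hcomm : Subgroup.center H = commutator H := by
    apply le_antisymm
    · rw [hgen, Subgroup.zpowers_le]
      exact Subgroup.commutator_mem_commutator (Subgroup.mem_top a) (Subgroup.mem_top b)
    · rw [commutator_def, Subgroup.commutator_le]
      intro a _ b _
      exact hcH a b
  have hfrat : Subgroup.center H = frattini H := by
    apply le_antisymm
    · exact aux_frat a b hgen
    · obtain ⟨T, hT1, hT2, hT3⟩ := aux_compl hp (Subgroup.center H) (frattini H) hcH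
        (fun x => by rw [hcen, Subgroup.mem_subgroupOf]; exact hpow x)
      have : T ⊔ frattini H = ⊤ := by
        rw [eq_top_iff]
        intro g _
        obtain ⟨s, hs, t, ht, rfl⟩ := hT3 g
        exact Subgroup.mul_mem _ (Subgroup.mem_sup_right hs) (Subgroup.mem_sup_left ht)
      have hTt := frattini_nongenerating this
      intro x hx
      exact hT2 x hx (by rw [hTt]; trivial)
  obtain ⟨m, hm⟩ := aux_even hp _ hcH hcard rfl
  refine ⟨m, H, Subgroup.center E, ⟨hcomm, hfrat, hcard⟩, hm, ?_, ?_, ?_, ?_, ?_⟩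
  · rw [hz]; infer_instance
  · rw [hz, Nat.card_zpowers]
    exact orderOf_eq_prime_pow (n := 1) (by simpa using hzp) hzpp
  · intro h _ k hk
    exact (Subgroup.mem_center_iff.1 hk) h
  · rw [eq_top_iff]
    intro g _
    obtain ⟨s, hs, t, ht, rfl⟩ := hprod g
    exact Subgroup.mul_mem _ (Subgroup.mem_sup_right hs) (Subgroup.mem_sup_left ht)
  · rw [hcen]
    ext ⟨x, hx⟩
    simp only [Subgroup.mem_subgroupOf, Subgroup.mem_inf]
    exact ⟨fun h => hint x h.2 hx, fun h => ⟨hx, hCc h⟩⟩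

theorem aux_omega {p : ℕ} (hp : p.Prime) {G : Type*} [Group G] (C : Subgroup G) :
    ∃ Z : Subgroup G, (∀ x ∈ Z, x ∈ Subgroup.center G ∧ x ^ p = 1) ∧ (∀ x ∈ Z, x ∈ C → x = 1) ∧
      ∀ x ∈ Subgroup.center G, x ^ p = 1 → ∃ c ∈ C, ∃ t ∈ Z, x = c * t := by
  let Ω : Subgroup (Subgroup.center G) :=
    { carrier := {x | x ^ p = 1}
      one_mem' := one_pow p
      mul_mem' := fun {a b} ha hb => by
        have h : Commute a b := Subtype.ext ((Subgroup.mem_center_iff.1 b.2) a)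
        show (a * b) ^ p = 1
        rw [h.mul_pow, show a ^ p = 1 from ha, show b ^ p = 1 from hb, one_mul]
      inv_mem' := fun {a} ha => by
        show a⁻¹ ^ p = 1
        rw [inv_pow, show a ^ p = 1 from ha, inv_one] }
  have hΩ : ∀ x : Subgroup.center G, x ∈ Ω ↔ (x : G) ^ p = 1 := by
    intro x
    show x ^ p = 1 ↔ _
    simp [Subtype.ext_iff]
  let iΩ : CommGroup Ω := { (inferInstance : Group Ω) with
    mul_comm := fun a b => Subtype.ext (Subtype.ext ((Subgroup.mem_center_iff.1 b.1.2) a.1.1)) }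
  obtain ⟨T, hT⟩ := aux_compl_comm hp (A := Ω) (fun x => by
    ext; exact (hΩ x.1).1 x.2) ((C.subgroupOf (Subgroup.center G)).subgroupOf Ω)
  let Z : Subgroup G := (T.map Ω.subtype).map (Subgroup.center G).subtype
  refine ⟨Z, ?_, ?_, ?_⟩
  · rintro _ ⟨_, ⟨t, ht, rfl⟩, rfl⟩
    exact ⟨t.1.2, (hΩ t.1).1 t.2⟩
  · rintro _ ⟨_, ⟨t, ht, rfl⟩, rfl⟩ htC
    have := Subgroup.disjoint_def.1 hT.disjoint (x := t) htC ht
    rw [this]; rfl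
  · intro x hx hxp
    let x' : Ω := ⟨⟨x, hx⟩, (hΩ _).2 hxp⟩
    have : x' ∈ ((C.subgroupOf (Subgroup.center G)).subgroupOf Ω) ⊔ T := by
      rw [hT.sup_eq_top]; trivial
    obtain ⟨c, hc, t, ht, h⟩ := Subgroup.mem_sup.1 this
    refine ⟨c.1.1, hc, t.1.1, ⟨_, ⟨t, ht, rfl⟩, rfl⟩, ?_⟩
    exact (congrArg (fun y : Ω => (y.1.1 : G)) h).symm

theorem aux_main {p : ℕ} (hp : p.Prime) {G : Type} [Group G] [Finite G] (C : Subgroup G)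
    (hC : Nat.card C = p) (hc : ∀ a b : G, ⁅a, b⁆ ∈ C) (hpow : ∀ a : G, a ^ p ∈ C)
    (hnab : ∃ a b : G, a * b ≠ b * a) (z : G) (hz : z ∈ Subgroup.center G)
    (hzp : z ^ p ≠ 1) : ∃ (E Z : Type) (_ : Group E) (_ : CommGroup Z) (m : ℕ),
      IsTypeE2 p m E ∧ Finite Z ∧ (∀ z : Z, z ^ p = 1) ∧
      Nonempty (G ≃* E × Z) := by
  obtain ⟨Z, hZ1, hZ2, hZ3⟩ := aux_omega hp C
  obtain ⟨E, hCE, hint, hprod⟩ := aux_compl hp C Z hc hpow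
  have hdis : ∀ x ∈ Z, x ∈ E → x = 1 := fun x hx hxE => hZ2 x hx (hint x hx hxE)
  have hZc : ∀ x ∈ Z, ∀ g, Commute x g := fun x hx g =>
    ((Subgroup.mem_center_iff.1 (hZ1 x hx).1) g).symm
  obtain ⟨ζ, hζ, e, he, rfl⟩ := hprod z
  have hec : e ∈ Subgroup.center G := by
    have := Subgroup.mul_mem _ (Subgroup.inv_mem _ (hZ1 ζ hζ).1) hz
    simpa using this
  have hep : e ^ p ≠ 1 := by
    rw [(hZc ζ hζ e).mul_pow, (hZ1 ζ hζ).2, one_mul] at hzp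
    exact hzp
  have hCz := aux_gen hp C hC (hpow e) hep
  have hcenE : ∀ x ∈ E, (∀ y ∈ E, Commute y x) → x ∈ Subgroup.center G := by
    intro x hx h
    rw [Subgroup.mem_center_iff]
    intro g
    obtain ⟨s, hs, t, ht, rfl⟩ := hprod g
    exact ((hZc s hs x).mul_left (h t ht)).eq
  have hcen : Subgroup.center E = Subgroup.zpowers ⟨e, he⟩ := by
    apply le_antisymm
    · rintro ⟨x, hx⟩ hxc
      have hxc' : x ∈ Subgroup.center G := hcenE x hx fun y hy =>
        congrArg Subtype.val ((Subgroup.mem_center_iff.1 hxc) ⟨y, hy⟩)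
      have hxp := hpow x
      rw [hCz] at hxp
      obtain ⟨i, hi⟩ := Subgroup.mem_zpowers_iff.1 hxp
      have hcm : Commute x (e ^ (-i)) := ((Subgroup.mem_center_iff.1 hxc') _).symm
      obtain ⟨c, hcC, t, ht, h⟩ := hZ3 (x * e ^ (-i))
        (Subgroup.mul_mem _ hxc' (Subgroup.zpow_mem _ hec _)) (by
          rw [hcm.mul_pow, ← hi, ← zpow_natCast (e ^ (-i)), ← zpow_natCast e p, ← zpow_mul,
            ← zpow_mul, ← zpow_add]
          have : (p : ℤ) * i + -i * p = 0 := by ring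
          rw [this, zpow_zero])
      have htE : t ∈ E := by
        have : t = c⁻¹ * (x * e ^ (-i)) := by rw [h]; group
        rw [this]
        exact E.mul_mem (E.inv_mem (hCE hcC)) (E.mul_mem hx (E.zpow_mem he _))
      rw [hdis t ht htE, mul_one] at h
      rw [hCz] at hcC
      obtain ⟨j, hj⟩ := Subgroup.mem_zpowers_iff.1 hcC
      refine Subgroup.mem_zpowers_iff.2 ⟨p * j + i, ?_⟩
      ext
      show e ^ ((p : ℤ) * j + i) = x
      rw [zpow_add, zpow_mul, zpow_natCast, hj, ← h]
      group
    · rw [Subgroup.zpowers_le, Subgroup.mem_center_iff]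
      intro g
      ext
      exact (Subgroup.mem_center_iff.1 hec) g
  obtain ⟨m, hm⟩ := aux_E2 hp (E := E) (C.subgroupOf E)
    (by rw [← hC]; exact Nat.card_congr (Subgroup.subgroupOfEquivOfLe hCE).toEquiv)
    (fun a b => hc a b) (fun a => hpow a) (by
      by_contra hcon
      push Not at hcon
      obtain ⟨a, b, hab⟩ := hnab
      apply hab
      obtain ⟨s, hs, t, ht, rfl⟩ := hprod a
      obtain ⟨s', hs', t', ht', rfl⟩ := hprod b
      have h1 : Commute t t' := congrArg Subtype.val (hcon ⟨t, ht⟩ ⟨t', ht'⟩)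
      exact ((hZc s hs _).mul_left ((hZc s' hs' t).symm.mul_right h1)).eq) ⟨e, he⟩ hcen
    (fun h => hep (congrArg Subtype.val h))
  let iZ : CommGroup Z := { (inferInstance : Group Z) with
    mul_comm := fun a b => Subtype.ext (hZc a a.2 b).eq }
  refine ⟨E, Z, inferInstance, iZ, m, hm, inferInstance, fun x => Subtype.ext (hZ1 x x.2).2, ⟨?_⟩⟩
  let f : E × Z →* G :=
    { toFun := fun x => x.1.1 * x.2.1
      map_one' := by simp
      map_mul' := fun x y => by
        show x.1.1 * y.1.1 * (x.2.1 * y.2.1) = x.1.1 * x.2.1 * (y.1.1 * y.2.1)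
        have := (hZc x.2.1 x.2.2 y.1.1).eq
        rw [mul_assoc, mul_assoc, ← mul_assoc y.1.1, ← this, mul_assoc] }
  refine (MulEquiv.ofBijective f ⟨?_, ?_⟩).symm
  · rw [injective_iff_map_eq_one]
    rintro ⟨⟨x, hx⟩, ⟨y, hy⟩⟩ h
    have h : x * y = 1 := h
    have hxy : x = y⁻¹ := eq_inv_of_mul_eq_one_left h
    have : y ∈ E := by rw [hxy] at hx; simpa using hx
    have hy1 := hdis y hy this
    subst hy1
    rw [inv_one] at hxy
    subst hxy
    rfl
  · intro g
    obtain ⟨s, hs, t, ht, rfl⟩ := hprod g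
    exact ⟨(⟨t, ht⟩, ⟨s, hs⟩), (hZc s hs t).eq.symm⟩

end AuxClass

/-- **Theorem 5.** Let `G` be a non-abelian `p`-group of order `p^n` with elementary
abelian abelianization, `|G'| = p`, a center of order at least `p^3` and exponent
exactly `p^2`, and `s(G) = 2`. Then `G ≅ E(2) × Z` with `Z` elementary abelian. -/
theorem classification_big_center_exponent_p_sq {p n : ℕ} (hp : p.Prime)
    {G : Type*} [Group G] (hG : Nat.card G = p ^ n)
    (hnab : ∃ a b : G, a * b ≠ b * a)
    (habElem : ∀ x : Abelianization G, x ^ p = 1)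
    (hG' : Nat.card (commutator G) = p)
    (hZcard : p ^ 3 ≤ Nat.card (Subgroup.center G))
    (hZexp : Monoid.exponent (Subgroup.center G) = p ^ 2)
    (hM : Nat.card (SchurMultiplier G) = p ^ ((n - 1) * (n - 2) / 2 - 1)) :
    ∃ (E Z : Type) (_ : Group E) (_ : CommGroup Z) (m : ℕ),
      IsTypeE2 p m E ∧ Finite Z ∧ (∀ z : Z, z ^ p = 1) ∧
      Nonempty (G ≃* E × Z) := by
  have hfin : Finite G := Nat.finite_of_card_ne_zero (by rw [hG]; exact pow_ne_zero _ hp.ne_zero)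
  obtain ⟨z, hz, hzp⟩ : ∃ z ∈ Subgroup.center G, z ^ p ≠ 1 := by
    by_contra hcon
    push Not at hcon
    have : Monoid.exponent (Subgroup.center G) ∣ p :=
      Monoid.exponent_dvd_of_forall_pow_eq_one fun x => Subtype.ext (hcon x x.2)
    rw [hZexp] at this
    have h1 := Nat.le_of_dvd hp.pos this
    have h2 := hp.one_lt
    nlinarith
  have hpow : ∀ a : G, a ^ p ∈ commutator G := by
    intro a
    have h := habElem (Abelianization.of a)
    rw [← map_pow] at h
    exact (QuotientGroup.eq_one_iff _).1 h
  let e : Shrink.{0} G ≃* G := Shrink.mulEquiv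
  have hcard : Nat.card ((commutator G).comap e.toMonoidHom) = p := by
    rw [← hG']
    exact Nat.card_congr ((e.subgroupMap _).toEquiv.trans (Equiv.setCongr (by
      ext x; simp [Subgroup.map_comap_eq])))
  have hf0 : Finite (Shrink.{0} G) := Finite.of_equiv _ e.toEquiv.symm
  obtain ⟨a, b, hab⟩ := hnab
  obtain ⟨E, Z, iE, iZ, m, h1, h2, h3, ⟨f⟩⟩ := aux_main hp ((commutator G).comap e.toMonoidHom) hcard
    (fun a b => by
      rw [Subgroup.mem_comap, map_commutatorElement]
      exact Subgroup.commutator_mem_commutator (Subgroup.mem_top _) (Subgroup.mem_top _))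
    (fun a => by rw [Subgroup.mem_comap, map_pow]; exact hpow _)
    ⟨e.symm a, e.symm b, fun h => hab (by simpa using congrArg e h)⟩ (e.symm z)
    (by
      rw [Subgroup.mem_center_iff] at hz ⊢
      intro g
      apply e.injective
      simpa using hz (e g))
    (fun h => hzp (by simpa using congrArg e h))
  exact ⟨E, Z, iE, iZ, m, h1, h2, h3, ⟨e.symm.trans f⟩⟩
end
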